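/- The achromatic number of the Cartesian product K_6 □ K_7 equals 18. -/

import Mathlib

/-- A proper complete vertex colouring: proper, uses every colour of `C`,
and every pair of distinct colours appears on the endpoints of some edge. -/
def IsProperComplete {V C : Type*} (G : SimpleGraph V) (f : V → C) : Prop :=
  (∀ v w, G.Adj v w → f v ≠ f w) ∧
  Function.Surjective f ∧
  ∀ c₁ c₂ : C, c₁ ≠ c₂ → ∃ v w, G.Adj v w ∧ f v = c₁ ∧ f w = c₂

/-- The achromatic number: the maximum number of colours in a proper complete
vertex colouring. -/
noncomputable def achr {V : Type*} (G : SimpleGraph V) : ℕ :=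
  sSup {n : ℕ | ∃ f : V → Fin n, IsProperComplete G f}

set_option exponentiation.threshold 3000

namespace Achr

/-- Evaluate `n` to a literal before passing it on. -/
noncomputable def frc {α : Type} (n : Nat) (k : Nat → α) : α :=
  @Nat.rec (fun _ => α) (k (nat_lit 0)) (fun m _ => k (Nat.succ m)) n

/-- if-then-else on Booleans -/
noncomputable def ite' (b : Bool) (t e : Bool) : Bool := @Bool.rec (fun _ => Bool) e t b

/-- `a` without the bits of `b` -/
def del (a b : Nat) : Nat := Nat.xor a (Nat.land a b)

/-- index of the power of two `l < 2 ^ 64` (only a heuristic, never trusted) -/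
def ixB (l : Nat) : Nat :=
  Nat.land (Nat.shiftRight (nat_lit 29113689166386177134818256396961932302781203400706803559705696567742888307168314405381828066598888384665765789059139004609172552720167866580779411794375181664256)
    (Nat.mul (nat_lit 8) (Nat.mod l (nat_lit 67)))) (nat_lit 63)

/-- `a` for `l = 2 ^ (64 * a)` (only a heuristic, never trusted) -/
def ixC (l : Nat) : Nat :=
  Nat.land (Nat.shiftRight (nat_lit 240049959923019778975192208397064271678855259300181333445694578217298280425656282612080613619356270224366132070348294506342273104926661756289514649392463023512722346725578501604705648418307659150128688103881987296923384604284380985035665440768)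
    (Nat.mul (nat_lit 8) (Nat.mod l (nat_lit 103)))) (nat_lit 63)

/-- scramble the low 64 bits (they carry no information; this avoids hash collisions) -/
def hs (n : Nat) : Nat := Nat.xor n (Nat.mod n (nat_lit 2305843009213693951))

/-- lowest set bit -/
def low (l : Nat) : Nat := del l (Nat.sub l (nat_lit 1))

/-- adjacency of cells -/
def nbB (x u : Nat) : Bool :=
  Bool.and (Bool.not (Nat.beq x u))
    (Bool.or (Nat.beq (x / 7) (u / 7)) (Nat.beq (x % 7) (u % 7)))

/-- mask of a predicate -/
noncomputable def mk (P : Nat → Bool) (n : Nat) : Nat :=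
  @Nat.rec (fun _ => Nat) (nat_lit 0)
    (fun i ih => Nat.lor ih (Nat.shiftLeft (@Bool.rec (fun _ => Nat) (nat_lit 0) (nat_lit 1) (P i)) i)) n

/-- concatenation of `n` fields of width `w` -/
noncomputable def cat (w : Nat) (F : Nat → Nat) (n : Nat) : Nat :=
  @Nat.rec (fun _ => Nat) (nat_lit 0) (fun i ih => Nat.lor ih (Nat.shiftLeft (F i) (Nat.mul w i))) n

noncomputable def lineBits (x : Nat) : Nat := Nat.lor (Nat.shiftLeft 1 (x / 7)) (Nat.shiftLeft 1 (6 + x % 7))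

/-- put a table entry above a junk field -/
noncomputable def up (x n : Nat) : Nat :=
  Nat.lor (Nat.shiftLeft n 64) (Nat.mod (Nat.mul (Nat.succ x) 11400714819323198485) (Nat.pow 2 64))

noncomputable def tabU (x : Nat) : Nat := cat 64 (fun u => cond (nbB x u) 4398046511103 0) 42
noncomputable def tabV (x : Nat) : Nat := cat 64 (fun _ => mk (nbB x) 42) 42
noncomputable def tabW (x : Nat) : Nat := Nat.lor (Nat.lor (tabU x) (tabV x)) (Nat.shiftLeft (lineBits x) 2688)
noncomputable def tabT (x : Nat) : Nat :=
  cat 64 (fun u => cond (Nat.beq x u) 4398046511103 (Nat.shiftLeft 1 x)) 42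
noncomputable def big (f : Nat → Nat) (n : Nat) : Nat := cat 2816 (fun x => up x (f x)) n
noncomputable def cand0 : Nat :=
  cat 64 (fun x => mk (fun y => Bool.not (Bool.or (Nat.beq (x / 7) (y / 7)) (Nat.beq (x % 7) (y % 7)))) 42) 42

/-- table lookup -/
def lk (B x : Nat) : Nat := Nat.land (Nat.shiftRight B (Nat.mul (nat_lit 2816) x)) (Nat.sub (Nat.pow (nat_lit 2) (nat_lit 2816)) (nat_lit 1))

def colle (k : Nat) : Nat :=
  Nat.mul (Nat.land (Nat.sub (Nat.shiftLeft (nat_lit 2) k) (nat_lit 1)) (nat_lit 127)) (nat_lit 34630287489)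
def rowle (k : Nat) : Nat := Nat.sub (Nat.shiftLeft (nat_lit 128) (Nat.mul (nat_lit 7) k)) (nat_lit 1)

noncomputable def ONES : Nat := cat 64 (fun _ => 1) 42

noncomputable def tabE (k : Nat) : Nat :=
  cat 64 (fun x => cond (Nat.ble (x % 7) k) (Nat.shiftLeft 1 42) 0) 42

noncomputable def BU : Nat := big tabU 42
noncomputable def BV : Nat := big tabV 42
noncomputable def BW : Nat := big tabW 42
noncomputable def BT : Nat := big tabT 42
noncomputable def EL : Nat := big tabE 8
noncomputable def ON : Nat := up 0 ONES
noncomputable def MM : Nat := Nat.shiftLeft (Nat.mul ONES 4398046511103) 64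
noncomputable def HH : Nat := Nat.shiftLeft ONES 106
noncomputable def C0 : Nat := up 0 (tabE 0)

/-- no bits above the junk field -/
def nul (n : Nat) : Bool := Nat.beq (Nat.shiftRight n (nat_lit 64)) (nat_lit 0)

/-- bit of the pair `(x, y)` -/
def pbit (x y : Nat) : Nat := Nat.shiftLeft (nat_lit 1) (Nat.add (Nat.mul (nat_lit 64) (Nat.succ x)) y)

/-- loop over the bits of `op`; all children must be refuted -/
noncomputable def loop (child : Nat → Bool) (n : Nat) : Nat → Bool :=
  @Nat.rec (fun _ => Nat → Bool) (fun _ => false)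
    (fun _ ih op => ite' (Nat.beq op (nat_lit 0)) true
      (frc (ixB (low op)) fun y =>
        ite' (child y) (frc (Nat.xor op (Nat.shiftLeft (nat_lit 1) y)) ih) false)) n

/-- pairs with one cell near `a` or `b`, and the other one as well -/
noncomputable def satM (a b : Nat) : Nat :=
  Nat.land (Nat.lor (lk BU a) (lk BU b)) (Nat.lor (lk BV a) (lk BV b))

noncomputable def sat2 (ih : Nat → Nat → (Nat → Bool) → Bool) (z c : Nat) (k : Nat → Bool) (b a : Nat) : Bool :=
  ite' (Nat.beq (Nat.land z (pbit a b)) (nat_lit 0)) false <|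
    frc (hs (Nat.xor z (pbit a b))) fun z' =>
    frc (hs (del c (satM a b))) fun c' =>
    ih z' c' k

noncomputable def sat (n : Nat) : Nat → Nat → (Nat → Bool) → Bool :=
  @Nat.rec (fun _ => Nat → Nat → (Nat → Bool) → Bool) (fun _ c k => k c)
    (fun _ ih z c k => ite' (nul z) (k c)
      (frc (ixB (Nat.mod (low (Nat.shiftRight z (nat_lit 64))) (nat_lit 18446744073709551615))) fun b =>
        frc (ixC (Nat.shiftRight (low (Nat.shiftRight z (nat_lit 64))) b)) fun a => sat2 ih z c k b a)) n

/-- heuristic choice of the branching cell -/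
noncomputable def pickH (el : Nat) (n : Nat) : Nat → (Nat → Bool) → Bool :=
  @Nat.rec (fun _ => Nat → (Nat → Bool) → Bool) (fun _ _ => false)
    (fun _ ih v k =>
      frc (hs (del el (Nat.add v MM))) fun e =>
      ite' (nul e)
        (frc (hs (Nat.land v (Nat.sub v (Nat.shiftRight (Nat.land (Nat.add v MM) HH) (nat_lit 42))))) fun v' => ih v' k)
        (frc (ixC (low (Nat.shiftRight e (nat_lit 106)))) k)) n

abbrev StF := Nat → Nat → Nat → Nat → Nat → Nat → Nat → Nat → Nat → Nat → Nat → Bool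

noncomputable def stepS2 (ih : StF) (s : Nat)
    (cand c0' c1' c2' q1 q2 must un ns fr fc ov : Nat) : Bool :=
   ite' (nul (Nat.land ov must))
    (frc (hs (del cand (Nat.lor ov (lk BT s)))) fun cand' =>
     frc (hs (del un (pbit s (nat_lit 42)))) fun un' =>
     frc (Nat.succ ns) fun ns' =>
     ih cand' c0' c1' c2' q1 q2 must un' ns' fr fc)
    true

noncomputable def stepS1 (ih : StF) (s : Nat)
    (cand c0 c1 c2 q1 q2 must un ns fr fc : Nat) (m : Nat) : Bool :=
   frc (hs (Nat.xor c0 m)) fun c0' =>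
   frc (hs (Nat.xor c1 (Nat.land c0 m))) fun c1' =>
   frc (hs (Nat.xor c2 (Nat.land c1 (Nat.land c0 m)))) fun c2' =>
   frc (hs (Nat.land c0' (Nat.land c1' c2')))
     (stepS2 ih s cand c0' c1' c2' q1 q2 must un ns fr fc)

noncomputable def stepS0 (ih : StF) (s : Nat)
    (cand c0 c1 c2 q1 q2 must un ns fr fc : Nat) : Bool :=
   frc (hs (lk BW s)) (stepS1 ih s cand c0 c1 c2 q1 q2 must un ns fr fc)

noncomputable def stepS (SM : Nat) (ih : StF) (s : Nat)
    (cand c0 c1 c2 q1 q2 must un ns fr fc : Nat) : Bool :=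
  ite' (Nat.ble SM ns) true
  (ite' (Nat.beq (Nat.mod s (nat_lit 7)) (nat_lit 0)) true
    (stepS0 ih s cand c0 c1 c2 q1 q2 must un ns fr fc))

noncomputable def maxN (a b : Nat) : Nat := @Bool.rec (fun _ => Nat) a b (Nat.ble a b)

noncomputable def stepP4 (ih : StF) (x y z : Nat)
    (cand c0' c1' c2' q1' q2' must' un ns fr fc : Nat) : Bool :=
   frc (hs (del (del un (pbit x (nat_lit 42))) (pbit y (nat_lit 42)))) fun un' =>
   frc (maxN fr (Nat.succ (Nat.div y (nat_lit 7)))) fun fr' =>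
   frc (maxN fc (Nat.succ (Nat.mod y (nat_lit 7)))) fun fc' =>
   sat (nat_lit 20) z cand fun cand'' =>
     ih cand'' c0' c1' c2' q1' q2' must' un' ns fr' fc'

noncomputable def stepP3 (ih : StF) (x y m must : Nat)
    (cand c0' c1' c2' q1 q2 must' un ns fr fc : Nat) (bad : Nat) : Bool :=
   frc (hs (del (Nat.land cand (Nat.lor (lk BW x) (lk BW y))) (Nat.lor bad (Nat.lor (lk BT x) (lk BT y))))) fun cand' =>
   frc (hs (Nat.lor q2 (Nat.land q1 m))) fun q2' =>
   frc (hs (Nat.lor q1 m)) fun q1' =>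
   frc (hs (del (Nat.land q2' must') (Nat.land q2 must))) fun z =>
   stepP4 ih x y z cand' c0' c1' c2' q1' q2' must' un ns fr fc

noncomputable def stepP2 (ih : StF) (x y m must : Nat)
    (cand c0' c1' c2' q1 q2 must' un ns fr fc : Nat) (bad : Nat) : Bool :=
   ite' (nul (Nat.land bad must'))
    (stepP3 ih x y m must cand c0' c1' c2' q1 q2 must' un ns fr fc bad)
    true

noncomputable def stepP1 (ih : StF) (x : Nat)
    (cand c0 c1 c2 q1 q2 must un ns fr fc : Nat) (y m must' : Nat) : Bool :=
   frc (hs (Nat.xor c0 m)) fun c0' =>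
   frc (hs (Nat.xor c1 (Nat.land c0 m))) fun c1' =>
   frc (hs (Nat.xor c2 (Nat.land c1 (Nat.land c0 m)))) fun c2' =>
   frc (hs (Nat.lor (Nat.land c0' (Nat.land c1' c2')) (Nat.land q2 m)))
     (stepP2 ih x y m must cand c0' c1' c2' q1 q2 must' un ns fr fc)

noncomputable def stepP (ih : StF) (x : Nat)
    (cand c0 c1 c2 q1 q2 must un ns fr fc : Nat) (y : Nat) : Bool :=
   frc (hs (Nat.land (lk BW x) (lk BW y))) fun m =>
   frc (hs (Nat.lor must (pbit x y)))
     (stepP1 ih x cand c0 c1 c2 q1 q2 must un ns fr fc y m)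

noncomputable def branch1 (SM : Nat) (ih : StF)
    (cand c0 c1 c2 q1 q2 must un ns : Nat) (x : Nat) (fr fc : Nat) : Bool :=
  ite' (stepS SM ih x cand c0 c1 c2 q1 q2 must un ns fr fc)
    (frc (Nat.land (Nat.land (colle fc) (rowle fr)) (Nat.shiftRight cand (Nat.mul (nat_lit 64) (Nat.succ x))))
      (loop (stepP ih x cand c0 c1 c2 q1 q2 must un ns fr fc) (nat_lit 43)))
    false

noncomputable def branch (SM : Nat) (ih : StF)
    (cand c0 c1 c2 q1 q2 must un ns fr fc : Nat) (x : Nat) : Bool :=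
  ite' (Nat.beq (Nat.land un (pbit x (nat_lit 42))) (nat_lit 0)) false
    (frc (maxN fr (Nat.succ (Nat.div x (nat_lit 7)))) fun fr' =>
     frc (maxN fc (Nat.succ (Nat.mod x (nat_lit 7))))
       (branch1 SM ih cand c0 c1 c2 q1 q2 must un ns x fr'))

noncomputable def pick (cand un fc : Nat) (k : Nat → Bool) : Bool :=
  frc (hs (Nat.land un C0)) fun ph =>
  ite' (nul ph)
    (frc (hs (Nat.land cand (Nat.mul (colle fc) ON))) fun v =>
     frc (hs (Nat.land un (lk EL fc))) fun el =>
      pickH el (nat_lit 42) v k)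
    (frc (ixC (low (Nat.shiftRight ph (nat_lit 106)))) k)

/-- a cell without candidates -/
noncomputable def prop (SM : Nat) (ih : StF)
    (cand c0 c1 c2 q1 q2 must un ns fr fc : Nat) (s : Nat) : Bool :=
  ite' (Nat.beq (Nat.land un (pbit s (nat_lit 42))) (nat_lit 0)) false
  (ite' (Nat.beq (Nat.land (Nat.shiftRight cand (Nat.mul (nat_lit 64) (Nat.succ s))) (nat_lit 4398046511103)) (nat_lit 0))
    (stepS SM ih s cand c0 c1 c2 q1 q2 must un ns fr fc)
    false)

noncomputable def search (SM : Nat) (fuel : Nat) : StF :=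
  @Nat.rec (fun _ => StF) (fun _ _ _ _ _ _ _ _ _ _ _ => false)
    (fun _ ih cand c0 c1 c2 q1 q2 must un ns fr fc =>
      frc (hs (del un (Nat.add cand MM))) fun e =>
      ite' (nul e)
        (pick cand un fc (branch SM ih cand c0 c1 c2 q1 q2 must un ns fr fc))
        (frc (ixC (low (Nat.shiftRight e (nat_lit 106))))
          (prop SM ih cand c0 c1 c2 q1 q2 must un ns fr fc))) fuel

/-- run on the initial state -/
noncomputable def run (SM lb pb : Nat) (t : Bool) (fuel : Nat) : Bool :=
  frc (up 0 cand0) fun cand =>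
  frc (up 0 (Nat.lor (Nat.mul (Nat.mod pb 2) (Nat.sub (Nat.pow 2 2688) 1)) (Nat.mul (Nat.mod lb 2) (Nat.shiftLeft 8191 2688)))) fun c0 =>
  frc (up 0 (Nat.lor (Nat.mul (Nat.div pb 2) (Nat.sub (Nat.pow 2 2688) 1)) (Nat.mul (Nat.div lb 2) (Nat.shiftLeft 8191 2688)))) fun c1 =>
  frc (up 0 (Nat.shiftLeft 8191 2688)) fun must =>
  frc HH fun un =>
  ite' t
   (stepS0 (search SM fuel) 0 cand c0 c1 0 0 0 must un 0 1 1)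
   (search SM fuel cand c0 c1 0 0 0 must un 0 0 1)

theorem frc_eq {α : Type} (n : Nat) (k : Nat → α) : frc n k = k n := by
  cases n <;> rfl

theorem ite_eq (b t e : Bool) : ite' b t e = cond b t e := by
  cases b <;> rfl

theorem tb_land (a b i : Nat) : (Nat.land a b).testBit i = (a.testBit i && b.testBit i) :=
  Nat.testBit_and a b i
theorem tb_lor (a b i : Nat) : (Nat.lor a b).testBit i = (a.testBit i || b.testBit i) :=
  Nat.testBit_or a b i
theorem tb_xor (a b i : Nat) : (Nat.xor a b).testBit i = ((a.testBit i) ^^ (b.testBit i)) :=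
  Nat.testBit_xor a b i
theorem tb_shl (a k i : Nat) : (Nat.shiftLeft a k).testBit i = (decide (k ≤ i) && a.testBit (i - k)) :=
  Nat.testBit_shiftLeft a
theorem tb_shr (a k i : Nat) : (Nat.shiftRight a k).testBit i = a.testBit (k + i) :=
  Nat.testBit_shiftRight a
theorem tb_one (i : Nat) : (1 : Nat).testBit i = decide (i = 0) := by
  cases i with
  | zero => rfl
  | succ n => simp [Nat.testBit_succ]

theorem tb_del (a b i : Nat) : (del a b).testBit i = (a.testBit i && !(b.testBit i)) := by
  unfold del
  rw [tb_xor, tb_land]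
  cases a.testBit i <;> cases b.testBit i <;> rfl

theorem tb_hs (n i : Nat) (h : 64 ≤ i) : (hs n).testBit i = n.testBit i := by
  unfold hs
  rw [tb_xor]
  have h1 : (Nat.mod n 2305843009213693951).testBit i = false := by
    apply Nat.testBit_lt_two_pow
    calc Nat.mod n 2305843009213693951 < 2305843009213693951 := Nat.mod_lt _ (by norm_num)
      _ < 2 ^ 64 := by norm_num
      _ ≤ 2 ^ i := Nat.pow_le_pow_right (by norm_num) h
  rw [show Nat.mod n (nat_lit 2305843009213693951) = Nat.mod n 2305843009213693951 from rfl, h1]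
  simp

theorem nul_iff (n : Nat) : nul n = true ↔ ∀ i, 64 ≤ i → n.testBit i = false := by
  unfold nul
  constructor
  · intro h i hi
    have h1 : Nat.shiftRight n 64 = 0 := Nat.eq_of_beq_eq_true h
    have h2 := tb_shr n 64 (i - 64)
    rw [h1] at h2
    rw [show i = 64 + (i - 64) by omega, ← h2]
    simp
  · intro h
    have h1 : Nat.shiftRight n 64 = 0 := by
      apply Nat.eq_of_testBit_eq
      intro i
      rw [tb_shr, h _ (by omega)]
      simp
    change Nat.beq (Nat.shiftRight n 64) 0 = true
    rw [h1]
    rfl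

theorem tb_pbit (x y i : Nat) : (pbit x y).testBit i = decide (i = 64 * (x + 1) + y) := by
  unfold pbit
  rw [tb_shl]
  change (decide (64 * (x + 1) + y ≤ i) && (1 : Nat).testBit (i - (64 * (x + 1) + y))) = _
  rw [tb_one, Bool.eq_iff_iff]
  simp
  omega

theorem land_pbit (z x y : Nat) (h : Nat.beq (Nat.land z (pbit x y)) 0 = false) :
    z.testBit (64 * (x + 1) + y) = true := by
  by_contra hc
  have : Nat.land z (pbit x y) = 0 := by
    apply Nat.eq_of_testBit_eq
    intro i
    rw [tb_land, tb_pbit]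
    by_cases hi : i = 64 * (x + 1) + y
    · subst hi
      simp at hc
      simp [hc]
    · simp [hi]
  rw [this] at h
  exact absurd h (by decide)

/-- fields -/
theorem cat_succ (w : Nat) (F : Nat → Nat) (n : Nat) :
    cat w F (n + 1) = Nat.lor (cat w F n) (Nat.shiftLeft (F n) (w * n)) := rfl

theorem cat_lt (w : Nat) (F : Nat → Nat) (n : Nat) (h : ∀ i < n, F i < 2 ^ w) :
    cat w F n < 2 ^ (w * n) := by
  induction n with
  | zero => simp [cat]
  | succ n ih =>
    rw [cat_succ]
    have h1 := ih fun i hi => h i (by omega)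
    have h2 : cat w F n < 2 ^ (w * (n + 1)) :=
      lt_of_lt_of_le h1 (Nat.pow_le_pow_right (by norm_num) (by nlinarith))
    have h3 : Nat.shiftLeft (F n) (w * n) < 2 ^ (w * (n + 1)) := by
      change F n <<< (w * n) < _
      rw [Nat.shiftLeft_eq, Nat.mul_succ, Nat.pow_add, mul_comm]
      exact Nat.mul_lt_mul_of_pos_left (h n (by omega)) (by positivity)
    exact Nat.or_lt_two_pow h2 h3

theorem tb_cat (w : Nat) (F : Nat → Nat) (n : Nat) (h : ∀ i < n, F i < 2 ^ w) (i j : Nat)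
    (hi : i < n) (hj : j < w) : (cat w F n).testBit (w * i + j) = (F i).testBit j := by
  induction n with
  | zero => omega
  | succ n ih =>
    rw [cat_succ, tb_lor, tb_shl]
    have h1 := fun i (hi : i < n) => h i (by omega)
    by_cases hin : i < n
    · rw [ih h1 hin]
      have : ¬ (w * n ≤ w * i + j) := by
        have : w * (i + 1) ≤ w * n := Nat.mul_le_mul_left _ hin
        rw [Nat.mul_succ] at this
        omega
      simp [this]
    · have hin' : i = n := by omega
      subst hin'
      have : (cat w F i).testBit (w * i + j) = false := by
        apply Nat.testBit_lt_two_pow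
        exact lt_of_lt_of_le (cat_lt w F i h1) (Nat.pow_le_pow_right (by norm_num) (by omega))
      simp [this]

theorem mk_succ (P : Nat → Bool) (n : Nat) :
    mk P (n + 1) = Nat.lor (mk P n) (Nat.shiftLeft (cond (P n) 1 0) n) := by
  change Nat.lor (mk P n) _ = _
  cases P n <;> rfl

theorem tb_mk (P : Nat → Bool) (n i : Nat) : (mk P n).testBit i = (decide (i < n) && P i) := by
  induction n with
  | zero => simp [mk]
  | succ n ih =>
    rw [mk_succ, tb_lor, ih, tb_shl]
    rcases lt_trichotomy i n with h | h | h
    · have h1 : ¬ n ≤ i := by omega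
      have h2 : i < n + 1 := by omega
      simp [h, h1, h2]
    · subst h
      cases h : P i <;> simp
    · have h1 : ¬ i < n := by omega
      have h2 : ¬ i < n + 1 := by omega
      have h3 : (1 : Nat).testBit (i - n) = false := by
        rw [tb_one]; simp; omega
      cases P n <;> simp [h1, h2, h3]

theorem mk_lt (P : Nat → Bool) (n : Nat) : mk P n < 2 ^ n := by
  apply Nat.lt_pow_two_of_testBit
  intro i hi
  rw [tb_mk]
  simp
  omega

theorem up_lt (x n k : Nat) (h : n < 2 ^ k) : up x n < 2 ^ (k + 64) := by
  unfold up
  apply Nat.or_lt_two_pow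
  · change n <<< 64 < _
    rw [Nat.shiftLeft_eq, Nat.pow_add]
    exact Nat.mul_lt_mul_of_pos_right h (by positivity)
  · calc Nat.mod _ (Nat.pow 2 64) < 2 ^ 64 := Nat.mod_lt _ (by norm_num)
      _ ≤ _ := Nat.pow_le_pow_right (by norm_num) (by omega)

theorem tb_up (x n i : Nat) : (up x n).testBit (64 + i) = n.testBit i := by
  unfold up
  rw [tb_lor, tb_shl]
  have : (Nat.mod (Nat.mul (Nat.succ x) 11400714819323198485) (Nat.pow 2 64)).testBit (64 + i) = false := by
    apply Nat.testBit_lt_two_pow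
    calc Nat.mod _ (Nat.pow 2 64) < 2 ^ 64 := Nat.mod_lt _ (by norm_num)
      _ ≤ _ := Nat.pow_le_pow_right (by norm_num) (by omega)
  rw [this]
  simp

theorem tb_ones (k i : Nat) : (Nat.sub (Nat.pow 2 k) 1).testBit i = decide (i < k) :=
  Nat.testBit_two_pow_sub_one k i

theorem tb_lkB (B x i : Nat) (hi : i < 2816) : (lk B x).testBit i = B.testBit (2816 * x + i) := by
  have h : (lk B x).testBit i =
      ((Nat.shiftRight B (Nat.mul 2816 x)).testBit i && decide (i < 2816)) := by
    rw [← tb_ones, ← tb_land]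
    rfl
  rw [h, tb_shr]
  simp [hi]

theorem tb_lk (f : Nat → Nat) (h : ∀ x < 42, f x < 2 ^ 2752) (x i : Nat) (hx : x < 42) (hi : i < 2752) :
    (lk (big f 42) x).testBit (64 + i) = (f x).testBit i := by
  rw [tb_lkB _ _ _ (by omega)]
  unfold big
  rw [tb_cat _ _ _ (fun i hi => up_lt i (f i) 2752 (h i hi)) x _ hx (by omega), tb_up]

theorem full_tb (j : Nat) (hj : j < 42) : Nat.testBit 4398046511103 j = true := by
  rw [show 4398046511103 = 2 ^ 42 - 1 by norm_num, Nat.testBit_two_pow_sub_one]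
  simp [hj]

theorem tabU_lt (x : Nat) : tabU x < 2 ^ 2688 := by
  refine cat_lt 64 _ 42 ?_
  intro i _
  cases nbB x i <;> simp

theorem tabV_lt (x : Nat) : tabV x < 2 ^ 2688 := by
  refine cat_lt 64 _ 42 ?_
  intro i _
  exact lt_of_lt_of_le (mk_lt _ _) (Nat.pow_le_pow_right (by norm_num) (by norm_num))

theorem tabT_lt (x : Nat) (hx : x < 42) : tabT x < 2 ^ 2688 := by
  refine cat_lt 64 _ 42 ?_
  intro i _
  cases Nat.beq x i
  · change 1 <<< x < _
    rw [Nat.shiftLeft_eq, one_mul]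
    exact Nat.pow_lt_pow_right (by norm_num) (by omega)
  · simp

theorem tabW_lt (x : Nat) (hx : x < 42) : tabW x < 2 ^ 2752 := by
  unfold tabW
  have hle : 2 ^ 2688 ≤ 2 ^ 2752 := Nat.pow_le_pow_right (by norm_num) (by norm_num)
  apply Nat.or_lt_two_pow
  · exact Nat.or_lt_two_pow (lt_of_lt_of_le (tabU_lt x) hle) (lt_of_lt_of_le (tabV_lt x) hle)
  · have h1 : lineBits x < 2 ^ 64 := by
      unfold lineBits
      apply Nat.or_lt_two_pow
      · change 1 <<< (x / 7) < _
        rw [Nat.shiftLeft_eq, one_mul]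
        exact Nat.pow_lt_pow_right (by norm_num) (by omega)
      · change 1 <<< (6 + x % 7) < _
        rw [Nat.shiftLeft_eq, one_mul]
        exact Nat.pow_lt_pow_right (by norm_num) (by omega)
    change lineBits x <<< 2688 < _
    rw [Nat.shiftLeft_eq, show 2752 = 64 + 2688 by norm_num, Nat.pow_add]
    exact Nat.mul_lt_mul_of_pos_right h1 (Nat.pow_pos (by norm_num))

theorem tb_tabU (x u v : Nat) (hu : u < 42) (hv : v < 42) :
    (tabU x).testBit (64 * u + v) = nbB x u := by
  unfold tabU
  rw [tb_cat _ _ _ _ u v hu (by omega)]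
  · cases nbB x u
    · simp
    · exact full_tb v hv
  · intro i _
    cases nbB x i <;> simp

theorem tb_tabV (x u v : Nat) (hu : u < 42) (hv : v < 42) :
    (tabV x).testBit (64 * u + v) = nbB x v := by
  unfold tabV
  rw [tb_cat _ _ _ _ u v hu (by omega), tb_mk]
  · simp [hv]
  · intro i _
    exact lt_of_lt_of_le (mk_lt _ _) (Nat.pow_le_pow_right (by norm_num) (by norm_num))

theorem tb_BU (x u v : Nat) (hx : x < 42) (hu : u < 42) (hv : v < 42) :
    (lk BU x).testBit (64 * (u + 1) + v) = nbB x u := by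
  rw [show 64 * (u + 1) + v = 64 + (64 * u + v) by ring, BU,
    tb_lk _ _ _ _ hx (by omega), tb_tabU x u v hu hv]
  exact fun x _ => lt_of_lt_of_le (tabU_lt x) (Nat.pow_le_pow_right (by norm_num) (by norm_num))

theorem tb_BV (x u v : Nat) (hx : x < 42) (hu : u < 42) (hv : v < 42) :
    (lk BV x).testBit (64 * (u + 1) + v) = nbB x v := by
  rw [show 64 * (u + 1) + v = 64 + (64 * u + v) by ring, BV,
    tb_lk _ _ _ _ hx (by omega), tb_tabV x u v hu hv]
  exact fun x _ => lt_of_lt_of_le (tabV_lt x) (Nat.pow_le_pow_right (by norm_num) (by norm_num))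

theorem tb_BT (x u v : Nat) (hx : x < 42) (hu : u < 42) (hv : v < 42) :
    (lk BT x).testBit (64 * (u + 1) + v) = (decide (x = u) || decide (x = v)) := by
  rw [show 64 * (u + 1) + v = 64 + (64 * u + v) by ring, BT,
    tb_lk _ _ _ _ hx (by omega)]
  · unfold tabT
    rw [tb_cat _ _ _ _ u v hu (by omega)]
    · by_cases h : x = u
      · subst h
        simp [full_tb v hv]
      · have : Nat.beq x u = false := by
          rw [Bool.eq_false_iff]
          exact fun hh => h (Nat.eq_of_beq_eq_true hh)
        rw [this]
        simp only [cond_false]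
        rw [tb_shl, tb_one]
        rw [Bool.eq_iff_iff]
        simp
        omega
    · intro i _
      cases Nat.beq x i
      · change 1 <<< x < _
        rw [Nat.shiftLeft_eq, one_mul]
        exact Nat.pow_lt_pow_right (by norm_num) (by omega)
      · simp
  · exact fun x hx => lt_of_lt_of_le (tabT_lt x hx) (Nat.pow_le_pow_right (by norm_num) (by norm_num))

theorem tb_BW (x u v : Nat) (hx : x < 42) (hu : u < 42) (hv : v < 42) :
    (lk BW x).testBit (64 * (u + 1) + v) = (nbB x u || nbB x v) := by
  rw [show 64 * (u + 1) + v = 64 + (64 * u + v) by ring, BW,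
    tb_lk _ tabW_lt _ _ hx (by omega)]
  unfold tabW
  rw [tb_lor, tb_lor, tb_tabU x u v hu hv, tb_tabV x u v hu hv, tb_shl]
  have : ¬ (2688 ≤ 64 * u + v) := by omega
  simp [this]

theorem tb_BWl (x i : Nat) (hx : x < 42) (hi : i < 13) :
    (lk BW x).testBit (2752 + i) = (decide (i = x / 7) || decide (i = 6 + x % 7)) := by
  rw [show 2752 + i = 64 + (2688 + i) by ring, BW, tb_lk _ tabW_lt _ _ hx (by omega)]
  unfold tabW
  have hle : 2 ^ 2688 ≤ 2 ^ (2688 + i) := Nat.pow_le_pow_right (by norm_num) (by omega)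
  rw [tb_lor, tb_lor, Nat.testBit_lt_two_pow (lt_of_lt_of_le (tabU_lt x) hle),
    Nat.testBit_lt_two_pow (lt_of_lt_of_le (tabV_lt x) hle), tb_shl]
  unfold lineBits
  rw [tb_lor, tb_shl, tb_shl, tb_one, tb_one, Bool.eq_iff_iff]
  simp
  omega

theorem tb_HH (p : Nat) : HH.testBit p = true ↔ ∃ u < 42, p = 64 * (u + 1) + 42 := by
  have h1 : ∀ i < 42, (fun _ : Nat => 1) i < 2 ^ 64 := by
    intro i _
    simp
  unfold HH
  rw [tb_shl]
  simp only [Bool.and_eq_true, decide_eq_true_eq]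
  constructor
  · rintro ⟨h, h2⟩
    have h3 : p - 106 < 2688 := by
      by_contra hc
      have := Nat.testBit_lt_two_pow (lt_of_lt_of_le (cat_lt 64 (fun _ => 1) 42 h1)
        (Nat.pow_le_pow_right (by norm_num) (show 64 * 42 ≤ p - 106 by omega)))
      rw [ONES, this] at h2
      exact absurd h2 (by simp)
    have h4 := tb_cat 64 (fun _ => 1) 42 h1 ((p - 106) / 64) ((p - 106) % 64) (by omega) (by omega)
    rw [Nat.div_add_mod, ← ONES, h2, tb_one] at h4
    simp at h4
    exact ⟨(p - 106) / 64, by omega, by omega⟩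
  · rintro ⟨u, hu, rfl⟩
    refine ⟨by omega, ?_⟩
    rw [show 64 * (u + 1) + 42 - 106 = 64 * u + 0 by omega, ONES, tb_cat 64 _ 42 h1 u 0 hu (by omega)]
    rfl

theorem tb_cand0 (x y : Nat) (hx : x < 42) (hy : y < 42) (h1 : x / 7 ≠ y / 7) (h2 : x % 7 ≠ y % 7) :
    (up 0 cand0).testBit (64 * (x + 1) + y) = true := by
  rw [show 64 * (x + 1) + y = 64 + (64 * x + y) by ring, tb_up, cand0, tb_cat _ _ _ _ x y hx (by omega),
    tb_mk]
  · have h3 : Nat.beq (x / 7) (y / 7) = false := by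
      rw [Bool.eq_false_iff]
      exact fun hh => h1 (Nat.eq_of_beq_eq_true hh)
    have h4 : Nat.beq (x % 7) (y % 7) = false := by
      rw [Bool.eq_false_iff]
      exact fun hh => h2 (Nat.eq_of_beq_eq_true hh)
    rw [h3, h4]
    simp [hy]
  · intro i _
    exact lt_of_lt_of_le (mk_lt _ _) (Nat.pow_le_pow_right (by norm_num) (by norm_num))

theorem tb_rc : ∀ fc < 8, ∀ fr < 7, ∀ y < 42, y % 7 ≤ fc → y / 7 ≤ fr →
    (Nat.land (colle fc) (rowle fr)).testBit y = true := by
  decide +kernel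

/-- cells of the board -/
abbrev Cell := Fin 6 × Fin 7

/-- index of a cell -/
def ix (z : Cell) : Nat := 7 * z.1.val + z.2.val

theorem ix_lt (z : Cell) : ix z < 42 := by
  have := z.1.isLt; have := z.2.isLt; unfold ix; omega
theorem ix_div (z : Cell) : ix z / 7 = z.1.val := by
  have := z.2.isLt; unfold ix; omega
theorem ix_mod (z : Cell) : ix z % 7 = z.2.val := by
  have := z.2.isLt; unfold ix; omega
theorem ix_inj {x y : Cell} (h : ix x = ix y) : x = y := by
  have h1 := ix_div x; have h2 := ix_div y; have h3 := ix_mod x; have h4 := ix_mod y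
  rw [h] at h1 h3
  exact Prod.ext (Fin.ext (by omega)) (Fin.ext (by omega))

/-- adjacency -/
def nb (x u : Cell) : Bool := nbB (ix x) (ix u)

theorem nat_beq_iff (a b : Nat) : Nat.beq a b = true ↔ a = b :=
  ⟨Nat.eq_of_beq_eq_true, fun h => by subst h; exact Nat.beq_refl a⟩

theorem nb_iff (x u : Cell) : nb x u = true ↔ x ≠ u ∧ (x.1 = u.1 ∨ x.2 = u.2) := by
  have h1 : Nat.beq (ix x) (ix u) = true ↔ x = u := by
    rw [nat_beq_iff]; exact ⟨ix_inj, fun h => by rw [h]⟩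
  unfold nb nbB
  simp only [Bool.and_eq_true, Bool.or_eq_true, Bool.not_eq_true', Bool.eq_false_iff, Ne, h1,
    nat_beq_iff, ix_div, ix_mod, Fin.ext_iff]

theorem nb_comm (x u : Cell) : nb x u = nb u x := by
  rw [Bool.eq_iff_iff, nb_iff, nb_iff]
  constructor
  · rintro ⟨h, h'⟩
    exact ⟨h.symm, h'.imp Eq.symm Eq.symm⟩
  · rintro ⟨h, h'⟩
    exact ⟨h.symm, h'.imp Eq.symm Eq.symm⟩

/-- position of the bit of a pair -/
def pos (u v : Cell) : Nat := 64 * (ix u + 1) + ix v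

theorem pos_inj {u v u' v' : Cell} (h : pos u v = pos u' v') : u = u' ∧ v = v' := by
  have := ix_lt u; have := ix_lt v; have := ix_lt u'; have := ix_lt v'
  unfold pos at h
  exact ⟨ix_inj (by omega), ix_inj (by omega)⟩

/-- true items of a configuration: pairs and lines -/
def TI (pb lb : Nat) (f : Cell → Cell) (p : Nat) (N : Cell → Bool) (b : Nat) : Prop :=
  (∃ u, f u ≠ u ∧ p = pos u (f u) ∧ N = (fun z => nb z u || nb z (f u)) ∧ b = pb) ∨
  (∃ r : Fin 6, p = 2752 + r.val ∧ N = (fun z => decide (z.1 = r)) ∧ b = lb) ∨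
  (∃ c : Fin 7, p = 2752 + (6 + c.val) ∧ N = (fun z => decide (z.2 = c)) ∧ b = lb)

theorem TI_W {pb lb : Nat} {f : Cell → Cell} {p : Nat} {N : Cell → Bool} {b : Nat}
    (h : TI pb lb f p N b) (z : Cell) : (lk BW (ix z)).testBit p = N z := by
  have hz := ix_lt z
  rcases h with ⟨u, _, rfl, rfl, _⟩ | ⟨r, rfl, rfl, _⟩ | ⟨c, rfl, rfl, _⟩
  · exact tb_BW _ _ _ hz (ix_lt _) (ix_lt _)
  · have := r.isLt; have := z.1.isLt
    rw [tb_BWl _ _ hz (by omega), Bool.eq_iff_iff, ix_div, ix_mod]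
    simp only [Bool.or_eq_true, decide_eq_true_eq, Fin.ext_iff]
    omega
  · have := c.isLt; have := z.1.isLt
    rw [tb_BWl _ _ hz (by omega), Bool.eq_iff_iff, ix_div, ix_mod]
    simp only [Bool.or_eq_true, decide_eq_true_eq, Fin.ext_iff]
    omega

theorem TI_ge {pb lb : Nat} {f : Cell → Cell} {p : Nat} {N : Cell → Bool} {b : Nat}
    (h : TI pb lb f p N b) : 64 ≤ p := by
  rcases h with ⟨u, _, rfl, rfl, _⟩ | ⟨r, rfl, rfl, _⟩ | ⟨c, rfl, rfl, _⟩
  · unfold pos; omega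
  · omega
  · omega

/-- cells that are not needed to see all the pairs -/
def RR (N : Cell → Bool) (f : Cell → Cell) (z : Cell) : Bool :=
  N z && (decide (f z = z) || (N (f z) && decide (ix z < ix (f z))))

/-- lower cells of pairs inside `N` -/
def R2 (N : Cell → Bool) (f : Cell → Cell) (z : Cell) : Bool :=
  N z && (N (f z) && decide (ix z < ix (f z)))

/-- what the search uses about a configuration -/
structure Valid (SM pb lb : Nat) (f : Cell → Cell) : Prop where
  inv : ∀ x, f (f x) = x
  diff : ∀ x, f x ≠ x → (f x).1 ≠ x.1 ∧ (f x).2 ≠ x.2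
  adj : ∀ x y, f x ≠ x → f y ≠ y → y ≠ x → y ≠ f x →
    nb x y = true ∨ nb x (f y) = true ∨ nb (f x) y = true ∨ nb (f x) (f y) = true
  load : ∀ p N b, TI pb lb f p N b → b + (Finset.univ.filter fun z => RR N f z = true).card ≤ 6
  dbl : ∀ p N b, TI pb lb f p N b → (Finset.univ.filter fun z => R2 N f z = true).card ≤ 2
  scard : (Finset.univ.filter fun z => f z = z).card ≤ SM

/-- search state -/
structure St where
  cand : Nat
  c0 : Nat
  c1 : Nat
  c2 : Nat
  q1 : Nat
  q2 : Nat
  must : Nat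
  un : Nat
  ns : Nat

/-- undecided -/
def St.U (st : St) (u : Cell) : Prop := st.un.testBit (64 * (ix u + 1) + 42) = true

instance (st : St) (u : Cell) : Decidable (st.U u) := by unfold St.U; infer_instance

/-- decided cells -/
def St.D (st : St) : Finset Cell := Finset.univ.filter fun u => ¬ st.U u

/-- counter value -/
def cv (c0 c1 c2 p : Nat) : Nat :=
  (c0.testBit p).toNat + 2 * (c1.testBit p).toNat + 4 * (c2.testBit p).toNat

/-- the state describes the decided part of `f` -/
structure Rep (pb lb : Nat) (st : St) (f : Cell → Cell) : Prop where
  r1 : ∀ u, st.U u → f u ≠ u → st.cand.testBit (pos u (f u)) = true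
  r2 : ∀ u, st.U u → st.U (f u)
  r3 : st.ns = (st.D.filter fun z => f z = z).card
  r4 : ∀ p N b, TI pb lb f p N b →
    cv st.c0 st.c1 st.c2 p = b + (st.D.filter fun z => RR N f z = true).card
  r5 : ∀ p N b, TI pb lb f p N b →
    st.q1.testBit p = decide (1 ≤ (st.D.filter fun z => R2 N f z = true).card)
  r5' : ∀ p N b, TI pb lb f p N b →
    st.q2.testBit p = decide (2 ≤ (st.D.filter fun z => R2 N f z = true).card)
  r6 : ∀ p, 64 ≤ p → st.must.testBit p = true → ∃ N b, TI pb lb f p N b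
  r7 : ∀ p, 64 ≤ p → st.un.testBit p = true → ∃ u : Cell, p = 64 * (ix u + 1) + 42

theorem card_ins (P : Cell → Prop) [DecidablePred P] (s : Cell) (D : Finset Cell) (h : s ∉ D) :
    ((insert s D).filter P).card = (D.filter P).card + (decide (P s)).toNat := by
  rw [Finset.filter_insert]
  by_cases hP : P s
  · have : s ∉ D.filter P := fun hh => h (Finset.mem_of_mem_filter _ hh)
    simp [hP, Finset.card_insert_of_notMem this]
  · simp [hP]

/-- adding a mask to the counters -/
theorem cv_add (c0 c1 c2 m p : Nat) (hp : 64 ≤ p) (h : cv c0 c1 c2 p + (m.testBit p).toNat ≤ 6) :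
    cv (hs (Nat.xor c0 m)) (hs (Nat.xor c1 (Nat.land c0 m)))
      (hs (Nat.xor c2 (Nat.land c1 (Nat.land c0 m)))) p = cv c0 c1 c2 p + (m.testBit p).toNat ∧
    (Nat.land (hs (Nat.xor c0 m)) (Nat.land (hs (Nat.xor c1 (Nat.land c0 m)))
      (hs (Nat.xor c2 (Nat.land c1 (Nat.land c0 m)))))).testBit p = false := by
  unfold cv at *
  simp only [tb_hs _ _ hp, tb_xor, tb_land] at *
  revert h
  generalize c0.testBit p = a0
  generalize c1.testBit p = a1
  generalize c2.testBit p = a2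
  generalize m.testBit p = a3
  revert a0 a1 a2 a3
  decide

/-- overflow mask when adding `m` -/
def ovf (st : St) (m : Nat) : Nat :=
  Nat.land (hs (Nat.xor st.c0 m)) (Nat.land (hs (Nat.xor st.c1 (Nat.land st.c0 m)))
      (hs (Nat.xor st.c2 (Nat.land st.c1 (Nat.land st.c0 m)))))

/-- next state after declaring `s` a single cell -/
noncomputable def stS (st : St) (s : Nat) : St where
  cand := hs (del st.cand (Nat.lor (hs (ovf st (hs (lk BW s)))) (lk BT s)))
  c0 := hs (Nat.xor st.c0 (hs (lk BW s)))
  c1 := hs (Nat.xor st.c1 (Nat.land st.c0 (hs (lk BW s))))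
  c2 := hs (Nat.xor st.c2 (Nat.land st.c1 (Nat.land st.c0 (hs (lk BW s)))))
  q1 := st.q1
  q2 := st.q2
  must := st.must
  un := hs (del st.un (pbit s 42))
  ns := st.ns + 1

/-- apply a state function -/
def ap (F : StF) (st : St) (fr fc : Nat) : Bool :=
  F st.cand st.c0 st.c1 st.c2 st.q1 st.q2 st.must st.un st.ns fr fc

theorem stepS0_eq (ih : StF) (s : Nat) (st : St) (fr fc : Nat) :
    stepS0 ih s st.cand st.c0 st.c1 st.c2 st.q1 st.q2 st.must st.un st.ns fr fc =
      cond (nul (Nat.land (hs (ovf st (hs (lk BW s)))) st.must)) (ap ih (stS st s) fr fc) true := by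
  simp only [stepS0, stepS1, stepS2, frc_eq, ite_eq]
  rfl

theorem U_S (st : St) (s u : Cell) : (stS st (ix s)).U u ↔ st.U u ∧ u ≠ s := by
  unfold St.U stS
  rw [tb_hs _ _ (by omega), tb_del, tb_pbit]
  have : ix u = ix s ↔ u = s := ⟨ix_inj, fun h => by rw [h]⟩
  simp [this]

theorem D_S (st : St) (s : Cell) : (stS st (ix s)).D = insert s st.D := by
  ext u
  simp only [St.D, Finset.mem_filter, Finset.mem_univ, true_and, Finset.mem_insert, U_S]
  tauto

theorem filter_le (P : Cell → Prop) [DecidablePred P] (D : Finset Cell) :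
    (D.filter P).card ≤ (Finset.univ.filter P).card :=
  Finset.card_le_card (Finset.filter_subset_filter _ (Finset.subset_univ _))

theorem repS {SM pb lb : Nat} {st : St} {f : Cell → Cell} (V : Valid SM pb lb f) (R : Rep pb lb st f)
    (s : Cell) (hs' : st.U s) (hf : f s = s) :
    Rep pb lb (stS st (ix s)) f ∧
      nul (Nat.land (hs (ovf st (hs (lk BW (ix s))))) st.must) = true := by
  have hsD : s ∉ st.D := by simp [St.D, hs']
  have key : ∀ p N b, TI pb lb f p N b →
      cv st.c0 st.c1 st.c2 p + ((hs (lk BW (ix s))).testBit p).toNat =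
        b + ((insert s st.D).filter fun z => RR N f z = true).card := by
    intro p N b hT
    rw [tb_hs _ _ (TI_ge hT), TI_W hT, R.r4 p N b hT, card_ins _ _ _ hsD]
    have : RR N f s = N s := by simp [RR, hf]
    rw [this]
    simp
    ring
  have key2 : ∀ p N b, TI pb lb f p N b →
      cv st.c0 st.c1 st.c2 p + ((hs (lk BW (ix s))).testBit p).toNat ≤ 6 := by
    intro p N b hT
    rw [key p N b hT]
    have := V.load p N b hT
    have := filter_le (fun z => RR N f z = true) (insert s st.D)
    omega
  have hov : ∀ p N b, TI pb lb f p N b → (hs (ovf st (hs (lk BW (ix s))))).testBit p = false := by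
    intro p N b hT
    rw [tb_hs _ _ (TI_ge hT)]
    exact (cv_add _ _ _ _ p (TI_ge hT) (key2 p N b hT)).2
  refine ⟨⟨?_, ?_, ?_, ?_, ?_, ?_, ?_, ?_⟩, ?_⟩
  · intro u hu hfu
    rw [U_S] at hu
    have hT : TI pb lb f (pos u (f u)) _ pb := Or.inl ⟨u, hfu, rfl, rfl, rfl⟩
    have hus : ix s ≠ ix u := fun h => hu.2 (ix_inj h).symm
    have hfs : ix s ≠ ix (f u) := fun h => hu.2 (by rw [← V.inv u, ← ix_inj h, hf])
    simp only [stS]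
    rw [tb_hs _ _ (TI_ge hT), tb_del, tb_lor, hov _ _ _ hT, R.r1 u hu.1 hfu]
    have := tb_BT (ix s) (ix u) (ix (f u)) (ix_lt _) (ix_lt _) (ix_lt _)
    simp only [pos]
    rw [this]
    simp [hus, hfs]
  · intro u hu
    rw [U_S] at hu ⊢
    exact ⟨R.r2 u hu.1, fun h => hu.2 (by rw [← V.inv u, h, hf])⟩
  · rw [D_S, card_ins _ _ _ hsD]
    simp [stS, hf, R.r3]
  · intro p N b hT
    rw [D_S, ← key p N b hT]
    exact (cv_add _ _ _ _ p (TI_ge hT) (key2 p N b hT)).1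
  · intro p N b hT
    rw [D_S, card_ins _ _ _ hsD]
    have : R2 N f s = false := by simp [R2, hf]
    rw [this]
    simpa [stS] using R.r5 p N b hT
  · intro p N b hT
    rw [D_S, card_ins _ _ _ hsD]
    have : R2 N f s = false := by simp [R2, hf]
    rw [this]
    simpa [stS] using R.r5' p N b hT
  · exact R.r6
  · intro p hp h
    simp only [stS] at h
    rw [tb_hs _ _ hp, tb_del] at h
    simp only [Bool.and_eq_true] at h
    exact R.r7 p hp h.1
  · rw [nul_iff]
    intro p hp
    rw [tb_land]
    by_contra hc
    simp only [Bool.not_eq_false, Bool.and_eq_true] at hc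
    obtain ⟨N, b, hT⟩ := R.r6 p hp hc.2
    rw [hov p N b hT] at hc
    simp at hc

theorem sat_sound (n : Nat) : ∀ (z c : Nat) (k : Nat → Bool), sat n z c k = true →
    ∃ c', k c' = true ∧ ∀ p, 64 ≤ p → c.testBit p = true →
      (∀ a b, b < 64 → z.testBit (64 * (a + 1) + b) = true → (satM a b).testBit p = false) →
      c'.testBit p = true := by
  induction n with
  | zero =>
    intro z c k h
    exact ⟨c, h, fun p _ hc _ => hc⟩
  | succ n ih =>
    intro z c k h
    have h' : ite' (nul z) (k c)
      (frc (ixB (Nat.mod (low (Nat.shiftRight z (nat_lit 64))) (nat_lit 18446744073709551615))) fun b =>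
        frc (ixC (Nat.shiftRight (low (Nat.shiftRight z (nat_lit 64))) b)) fun a =>
          sat2 (sat n) z c k b a) = true := h
    rw [ite_eq, frc_eq, frc_eq] at h'
    cases hz : nul z with
    | true =>
      rw [hz] at h'
      exact ⟨c, h', fun p _ hc _ => hc⟩
    | false =>
      rw [hz] at h'
      simp only [cond_false] at h'
      have hb : ixB (Nat.mod (low (Nat.shiftRight z (nat_lit 64))) (nat_lit 18446744073709551615)) < 64 :=
        lt_of_le_of_lt Nat.and_le_right (by norm_num)
      generalize ixB (Nat.mod (low (Nat.shiftRight z (nat_lit 64)))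
        (nat_lit 18446744073709551615)) = b at h' hb
      generalize ixC (Nat.shiftRight (low (Nat.shiftRight z (nat_lit 64))) b) = a at h'
      unfold sat2 at h'
      rw [ite_eq, frc_eq, frc_eq] at h'
      cases hq : Nat.beq (Nat.land z (pbit a b)) (nat_lit 0) with
      | true =>
        rw [hq] at h'
        simp at h'
      | false =>
        rw [hq] at h'
        simp only [cond_false] at h'
        have hab := land_pbit z a b hq
        obtain ⟨c', hk, hc'⟩ := ih _ _ _ h'
        refine ⟨c', hk, fun p hp hc hall => hc' p hp ?_ ?_⟩
        · rw [tb_hs _ _ hp, tb_del, hc, hall a b hb hab]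
          rfl
        · intro a' b' hb' hz'
          rw [tb_hs _ _ (by omega), tb_xor, tb_pbit] at hz'
          apply hall a' b' hb'
          by_cases hh : 64 * (a' + 1) + b' = 64 * (a + 1) + b
          · rw [hh]; exact hab
          · simpa [hh] using hz'

noncomputable def mP (x y : Nat) : Nat := hs (Nat.land (lk BW x) (lk BW y))

/-- next state after pairing `x` and `y`, with candidates `c` -/
noncomputable def stP (st : St) (x y c : Nat) : St where
  cand := c
  c0 := hs (Nat.xor st.c0 (mP x y))
  c1 := hs (Nat.xor st.c1 (Nat.land st.c0 (mP x y)))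
  c2 := hs (Nat.xor st.c2 (Nat.land st.c1 (Nat.land st.c0 (mP x y))))
  q1 := hs (Nat.lor st.q1 (mP x y))
  q2 := hs (Nat.lor st.q2 (Nat.land st.q1 (mP x y)))
  must := hs (Nat.lor st.must (pbit x y))
  un := hs (del (del st.un (pbit x 42)) (pbit y 42))
  ns := st.ns

/-- items violated by pairing `x` and `y` -/
noncomputable def badP (st : St) (x y : Nat) : Nat :=
  hs (Nat.lor (ovf st (mP x y)) (Nat.land st.q2 (mP x y)))

/-- candidates after pairing `x` and `y` -/
noncomputable def candP (st : St) (x y : Nat) : Nat :=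
  hs (del (Nat.land st.cand (Nat.lor (lk BW x) (lk BW y)))
    (Nat.lor (badP st x y) (Nat.lor (lk BT x) (lk BT y))))

/-- newly saturated pairs -/
noncomputable def zP (st : St) (x y : Nat) : Nat :=
  hs (del (Nat.land (stP st x y 0).q2 (stP st x y 0).must) (Nat.land st.q2 st.must))

theorem stepP_eq (ih : StF) (x y : Nat) (st : St) (fr fc : Nat) :
    stepP ih x st.cand st.c0 st.c1 st.c2 st.q1 st.q2 st.must st.un st.ns fr fc y =
      cond (nul (Nat.land (badP st x y) (stP st x y 0).must))
        (sat (nat_lit 20) (zP st x y) (candP st x y) fun c =>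
          ap ih (stP st x y c) (maxN fr (Nat.succ (Nat.div y (nat_lit 7))))
            (maxN fc (Nat.succ (Nat.mod y (nat_lit 7))))) true := by
  simp only [stepP, stepP1, stepP2, stepP3, stepP4, frc_eq, ite_eq]
  rfl

theorem U_P (st : St) (x y : Cell) (c : Nat) (u : Cell) :
    (stP st (ix x) (ix y) c).U u ↔ st.U u ∧ u ≠ x ∧ u ≠ y := by
  unfold St.U stP
  rw [tb_hs _ _ (by omega), tb_del, tb_del, tb_pbit, tb_pbit]
  have h1 : ix u = ix x ↔ u = x := ⟨ix_inj, fun h => by rw [h]⟩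
  have h2 : ix u = ix y ↔ u = y := ⟨ix_inj, fun h => by rw [h]⟩
  simp [h1, h2, and_assoc]

theorem D_P (st : St) (x y : Cell) (c : Nat) :
    (stP st (ix x) (ix y) c).D = insert x (insert y st.D) := by
  ext u
  simp only [St.D, Finset.mem_filter, Finset.mem_univ, true_and, Finset.mem_insert, U_P]
  tauto

theorem repP {SM pb lb : Nat} {st : St} {f : Cell → Cell} (V : Valid SM pb lb f) (R : Rep pb lb st f)
    (x y : Cell) (hx : st.U x) (hne : y ≠ x) (hf : f x = y) :
    nul (Nat.land (badP st (ix x) (ix y)) (stP st (ix x) (ix y) 0).must) = true ∧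
    ∀ c, (∀ p, 64 ≤ p → (candP st (ix x) (ix y)).testBit p = true →
      (∀ a b, b < 64 → (zP st (ix x) (ix y)).testBit (64 * (a + 1) + b) = true →
        (satM a b).testBit p = false) → c.testBit p = true) →
      Rep pb lb (stP st (ix x) (ix y) c) f := by
  have hy : st.U y := hf ▸ R.r2 x hx
  have hfy : f y = x := by rw [← hf, V.inv]
  have hyD : y ∉ st.D := by simp [St.D, hy]
  have hxD : x ∉ insert y st.D := by simp [St.D, hx, hne.symm]
  have hixne : ix x ≠ ix y := fun h => hne (ix_inj h).symm
  have hm : ∀ p N b, TI pb lb f p N b → (mP (ix x) (ix y)).testBit p = (N x && N y) := by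
    intro p N b hT
    rw [mP, tb_hs _ _ (TI_ge hT), tb_land, TI_W hT, TI_W hT]
  have cRR : ∀ N : Cell → Bool, ((insert x (insert y st.D)).filter fun z => RR N f z = true).card =
      (st.D.filter fun z => RR N f z = true).card + (N x && N y).toNat := by
    intro N
    rw [card_ins _ _ _ hxD, card_ins _ _ _ hyD]
    have h1 : RR N f x = (N x && N y && decide (ix x < ix y)) := by
      simp [RR, hf, hne, Bool.and_assoc]
    have h2 : RR N f y = (N x && N y && decide (ix y < ix x)) := by
      simp only [RR, hfy, hne.symm]
      cases N x <;> cases N y <;> simp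
    rw [h1, h2]
    rcases Nat.lt_or_gt_of_ne hixne with h | h
    · have h' : ¬ ix y < ix x := by omega
      simp [h, h']
    · have h' : ¬ ix x < ix y := by omega
      simp [h, h']
  have cR2 : ∀ N : Cell → Bool, ((insert x (insert y st.D)).filter fun z => R2 N f z = true).card =
      (st.D.filter fun z => R2 N f z = true).card + (N x && N y).toNat := by
    intro N
    rw [card_ins _ _ _ hxD, card_ins _ _ _ hyD]
    have h1 : R2 N f x = (N x && N y && decide (ix x < ix y)) := by
      simp [R2, hf, Bool.and_assoc]
    have h2 : R2 N f y = (N x && N y && decide (ix y < ix x)) := by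
      simp only [R2, hfy]
      cases N x <;> cases N y <;> simp
    rw [h1, h2]
    rcases Nat.lt_or_gt_of_ne hixne with h | h
    · have h' : ¬ ix y < ix x := by omega
      simp [h, h']
    · have h' : ¬ ix x < ix y := by omega
      simp [h, h']
  have key : ∀ p N b, TI pb lb f p N b →
      cv st.c0 st.c1 st.c2 p + ((mP (ix x) (ix y)).testBit p).toNat =
        b + ((insert x (insert y st.D)).filter fun z => RR N f z = true).card := by
    intro p N b hT
    rw [hm p N b hT, R.r4 p N b hT, cRR]
    ring
  have key2 : ∀ p N b, TI pb lb f p N b →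
      cv st.c0 st.c1 st.c2 p + ((mP (ix x) (ix y)).testBit p).toNat ≤ 6 := by
    intro p N b hT
    rw [key p N b hT]
    have := V.load p N b hT
    have := filter_le (fun z => RR N f z = true) (insert x (insert y st.D))
    omega
  have hbad : ∀ p N b, TI pb lb f p N b → (badP st (ix x) (ix y)).testBit p = false := by
    intro p N b hT
    have h1 := (cv_add _ _ _ _ p (TI_ge hT) (key2 p N b hT)).2
    rw [badP, tb_hs _ _ (TI_ge hT), tb_lor, ovf, h1, tb_land, hm p N b hT, R.r5' p N b hT]
    have h2 := V.dbl p N b hT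
    have h3 := filter_le (fun z => R2 N f z = true) (insert x (insert y st.D))
    rw [cR2] at h3
    cases hN : (N x && N y)
    · simp
    · rw [hN] at h3
      simp only [Bool.toNat_true] at h3
      simp
      omega
  have hmust : ∀ p, 64 ≤ p → (stP st (ix x) (ix y) 0).must.testBit p = true →
      ∃ N b, TI pb lb f p N b := by
    intro p hp h
    simp only [stP] at h
    rw [tb_hs _ _ hp, tb_lor, tb_pbit, Bool.or_eq_true] at h
    rcases h with h | h
    · exact R.r6 p hp h
    · simp only [decide_eq_true_eq] at h
      exact ⟨_, pb, Or.inl ⟨x, by rw [hf]; exact hne, by rw [h, hf, pos], rfl, rfl⟩⟩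
  have hq2 : ∀ p N b, TI pb lb f p N b → (stP st (ix x) (ix y) 0).q2.testBit p =
      decide (2 ≤ ((insert x (insert y st.D)).filter fun z => R2 N f z = true).card) := by
    intro p N b hT
    simp only [stP]
    rw [tb_hs _ _ (TI_ge hT), tb_lor, tb_land, hm p N b hT, R.r5 p N b hT, R.r5' p N b hT, cR2]
    cases N x && N y
    · simp
    · simp only [Bool.and_true, Bool.toNat_true]
      rw [Bool.eq_iff_iff]
      simp only [Bool.or_eq_true, decide_eq_true_eq]
      omega
  refine ⟨?_, ?_⟩
  · rw [nul_iff]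
    intro p hp
    rw [tb_land]
    by_contra hc
    simp only [Bool.not_eq_false, Bool.and_eq_true] at hc
    obtain ⟨N, b, hT⟩ := hmust p hp hc.2
    rw [hbad p N b hT] at hc
    simp at hc
  · intro c hc
    refine ⟨?_, ?_, ?_, ?_, ?_, ?_, ?_, ?_⟩
    · intro u hu hfu
      rw [U_P] at hu
      obtain ⟨hu, hux, huy⟩ := hu
      have hT : TI pb lb f (pos u (f u)) _ pb := Or.inl ⟨u, hfu, rfl, rfl, rfl⟩
      have n1 : ix x ≠ ix u := fun h => hux (ix_inj h).symm
      have n2 : ix y ≠ ix u := fun h => huy (ix_inj h).symm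
      have n3 : ix x ≠ ix (f u) := fun h => huy (by rw [← V.inv u, ← ix_inj h, hf])
      have n4 : ix y ≠ ix (f u) := fun h => hux (by rw [← V.inv u, ← ix_inj h, hfy])
      apply hc _ (TI_ge hT)
      · rw [candP, tb_hs _ _ (TI_ge hT), tb_del, tb_land, tb_lor, tb_lor, tb_lor, hbad _ _ _ hT,
          R.r1 u hu hfu, TI_W hT, TI_W hT]
        have e1 := tb_BT (ix x) (ix u) (ix (f u)) (ix_lt _) (ix_lt _) (ix_lt _)
        have e2 := tb_BT (ix y) (ix u) (ix (f u)) (ix_lt _) (ix_lt _) (ix_lt _)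
        simp only [pos]
        rw [e1, e2]
        have hadj := V.adj x u (by rw [hf]; exact hne) hfu hux (by rw [hf]; exact huy)
        rw [hf] at hadj
        simp only [n1, n2, n3, n4, decide_false, Bool.or_false, Bool.not_false, Bool.and_true,
          Bool.true_and, Bool.or_eq_true]
        tauto
      · intro a b hb hz
        rw [zP, tb_hs _ _ (by omega), tb_del, tb_land] at hz
        simp only [Bool.and_eq_true] at hz
        obtain ⟨⟨hz2, hzm⟩, -⟩ := hz
        obtain ⟨N, b', hT'⟩ := hmust _ (by omega) hzm
        rw [hq2 _ _ _ hT'] at hz2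
        simp only [decide_eq_true_eq] at hz2
        have hV := V.dbl _ _ _ hT'
        -- the pair `u, f u` would be a third one
        have hnot : ∀ w : Cell, w ∉ insert x (insert y st.D) → R2 N f w = false := by
          intro w hw
          by_contra hR
          have h1 := card_ins (fun z => R2 N f z = true) w _ hw
          have h2 := filter_le (fun z => R2 N f z = true) (insert w (insert x (insert y st.D)))
          simp only [Bool.not_eq_false] at hR
          simp only [hR, decide_true, Bool.toNat_true] at h1
          omega
        have huD : u ∉ insert x (insert y st.D) := by simp [St.D, hu, hux, huy]
        have hfuD : f u ∉ insert x (insert y st.D) := by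
          simp only [St.D, Finset.mem_insert, Finset.mem_filter, Finset.mem_univ, true_and, not_or,
            not_not]
          exact ⟨fun h => n3 (by rw [h]), fun h => n4 (by rw [h]), R.r2 u hu⟩
        have hNN : (N u && N (f u)) = false := by
          have h1 := hnot u huD
          have h2 := hnot (f u) hfuD
          have h3 : ix u ≠ ix (f u) := fun h => hfu (ix_inj h).symm
          unfold R2 at h1 h2
          rw [V.inv] at h2
          rcases Nat.lt_or_gt_of_ne h3 with h | h
          · simpa [h] using h1
          · have : ix (f u) < ix u := h
            rw [Bool.and_comm]
            simpa [this] using h2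
        rcases hT' with ⟨w, hw, hp, rfl, _⟩ | ⟨r, hp, rfl, _⟩ | ⟨r, hp, rfl, _⟩
        · have hwl := ix_lt w
          have hfwl := ix_lt (f w)
          have ha : a = ix w := by unfold pos at hp; omega
          have hb : b = ix (f w) := by unfold pos at hp; omega
          subst ha hb
          rw [satM, tb_land, tb_lor, tb_lor, pos, tb_BU _ _ _ hwl (ix_lt _) (ix_lt _),
            tb_BU _ _ _ hfwl (ix_lt _) (ix_lt _), tb_BV _ _ _ hwl (ix_lt _) (ix_lt _),
            tb_BV _ _ _ hfwl (ix_lt _) (ix_lt _)]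
          change ((nb w u || nb (f w) u) && (nb w (f u) || nb (f w) (f u))) = false
          rw [nb_comm w u, nb_comm (f w) u, nb_comm w (f u), nb_comm (f w) (f u)]
          exact hNN
        · exfalso
          have : (insert x (insert y st.D)).filter (fun z => R2 (fun z => decide (z.1 = r)) f z = true) = ∅ := by
            rw [Finset.filter_eq_empty_iff]
            intro z _ hz
            simp only [R2, Bool.and_eq_true, decide_eq_true_eq] at hz
            have h1 : f z ≠ z := fun h => by rw [h] at hz; omega
            exact (V.diff z h1).1 (by rw [hz.1, hz.2.1])
          rw [this] at hz2
          simp at hz2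
        · exfalso
          have : (insert x (insert y st.D)).filter (fun z => R2 (fun z => decide (z.2 = r)) f z = true) = ∅ := by
            rw [Finset.filter_eq_empty_iff]
            intro z _ hz
            simp only [R2, Bool.and_eq_true, decide_eq_true_eq] at hz
            have h1 : f z ≠ z := fun h => by rw [h] at hz; omega
            exact (V.diff z h1).2 (by rw [hz.1, hz.2.1])
          rw [this] at hz2
          simp at hz2
    · intro u hu
      rw [U_P] at hu ⊢
      exact ⟨R.r2 u hu.1, fun h => hu.2.2 (by rw [← V.inv u, h, hf]),
        fun h => hu.2.1 (by rw [← V.inv u, h, hfy])⟩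
    · rw [D_P, card_ins _ _ _ hxD, card_ins _ _ _ hyD]
      simp [stP, hf, hfy, hne, hne.symm, R.r3]
    · intro p N b hT
      rw [D_P, ← key p N b hT]
      exact (cv_add _ _ _ _ p (TI_ge hT) (key2 p N b hT)).1
    · intro p N b hT
      rw [D_P, cR2]
      simp only [stP]
      rw [tb_hs _ _ (TI_ge hT), tb_lor, hm p N b hT, R.r5 p N b hT]
      cases N x && N y <;> simp
    · intro p N b hT
      rw [D_P]
      exact hq2 p N b hT
    · exact hmust
    · intro p hp h
      simp only [stP] at h
      rw [tb_hs _ _ hp, tb_del, tb_del] at h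
      simp only [Bool.and_eq_true] at h
      exact R.r7 p hp h.1.1

theorem loop_sound (child : Nat → Bool) (n : Nat) : ∀ op, loop child n op = true →
    ∀ i, op.testBit i = true → child i = true := by
  induction n with
  | zero =>
    intro op h
    exact absurd h (by simp [loop])
  | succ n ih =>
    intro op h i hi
    have h' : ite' (Nat.beq op (nat_lit 0)) true
      (frc (ixB (low op)) fun y =>
        ite' (child y) (frc (Nat.xor op (Nat.shiftLeft (nat_lit 1) y)) (loop child n)) false) = true := h
    rw [ite_eq, frc_eq, ite_eq, frc_eq] at h'
    cases hz : Nat.beq op (nat_lit 0) with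
    | true =>
      have : op = 0 := Nat.eq_of_beq_eq_true hz
      rw [this] at hi
      simp at hi
    | false =>
      rw [hz] at h'
      simp only [cond_false] at h'
      generalize ixB (low op) = y at h'
      cases hc : child y with
      | false =>
        rw [hc] at h'
        simp at h'
      | true =>
        rw [hc] at h'
        simp only [cond_true] at h'
        by_cases hiy : i = y
        · rw [hiy]; exact hc
        · refine ih _ h' i ?_
          rw [tb_xor, tb_shl, hi]
          rw [tb_one]
          have : i < y ∨ ¬ i - y = 0 := by omega
          simpa using this

theorem pickH_sound (el : Nat) (n : Nat) : ∀ v k, pickH el n v k = true → ∃ x, k x = true := by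
  induction n with
  | zero =>
    intro v k h
    exact absurd h (by simp [pickH])
  | succ n ih =>
    intro v k h
    have h' : (frc (hs (del el (Nat.add v MM))) fun e =>
      ite' (nul e)
        (frc (hs (Nat.land v (Nat.sub v (Nat.shiftRight (Nat.land (Nat.add v MM) HH) (nat_lit 42))))) fun v' => pickH el n v' k)
        (frc (ixC (low (Nat.shiftRight e (nat_lit 106)))) k)) = true := h
    rw [frc_eq, ite_eq, frc_eq, frc_eq] at h'
    cases hz : nul (hs (del el (Nat.add v MM))) with
    | true =>
      rw [hz] at h'
      exact ih _ _ h'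
    | false =>
      rw [hz] at h'
      exact ⟨_, h'⟩

theorem pick_sound (cand un fc : Nat) (k : Nat → Bool) (h : pick cand un fc k = true) :
    ∃ x, k x = true := by
  unfold pick at h
  simp only [frc_eq, ite_eq] at h
  cases hz : nul (hs (Nat.land un C0)) with
  | true =>
    rw [hz] at h
    rw [cond_true] at h
    exact pickH_sound _ _ _ _ h
  | false =>
    rw [hz] at h
    exact ⟨_, h⟩

theorem maxN_eq (a b : Nat) : maxN a b = max a b := by
  unfold maxN
  cases h : Nat.ble a b with
  | true =>
    have := Nat.le_of_ble_eq_true h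
    change b = _
    omega
  | false =>
    have : ¬ a ≤ b := fun hh => by rw [Nat.ble_eq_true_of_le hh] at h; cases h
    change a = _
    omega

/-- relabel rows and columns -/
def conj (ρ : Equiv.Perm (Fin 6)) (κ : Equiv.Perm (Fin 7)) (f : Cell → Cell) (z : Cell) : Cell :=
  Prod.map ρ κ (f (ρ.symm z.1, κ.symm z.2))

/-- a family of configurations that is closed under relabelling of the later rows and columns -/
def Closed (fr fc : Nat) (E : (Cell → Cell) → Prop) : Prop :=
  ∀ (ρ : Equiv.Perm (Fin 6)) (κ : Equiv.Perm (Fin 7)), (∀ i, i.val < fr → ρ i = i) →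
    (∀ j, j.val < fc → κ j = j) → ∀ f, E f → E (conj ρ κ f)

theorem Closed.mono {fr fc fr' fc' : Nat} {E : (Cell → Cell) → Prop} (h : Closed fr fc E)
    (h1 : fr ≤ fr') (h2 : fc ≤ fc') : Closed fr' fc' E :=
  fun ρ κ a b f hf => h ρ κ (fun i hi => a i (by omega)) (fun j hj => b j (by omega)) f hf

theorem conj_fix {ρ : Equiv.Perm (Fin 6)} {κ : Equiv.Perm (Fin 7)} (f : Cell → Cell) (x : Cell)
    (h1 : ρ x.1 = x.1) (h2 : κ x.2 = x.2) : conj ρ κ f x = (ρ (f x).1, κ (f x).2) := by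
  unfold conj
  have e1 : ρ.symm x.1 = x.1 := by rw [Equiv.symm_apply_eq]; exact h1.symm
  have e2 : κ.symm x.2 = x.2 := by rw [Equiv.symm_apply_eq]; exact h2.symm
  rw [e1, e2]
  rfl

theorem Closed.fix {fr fc : Nat} {E : (Cell → Cell) → Prop} (h : Closed fr fc E) (x y : Cell)
    (h1 : x.1.val < fr) (h2 : x.2.val < fc) (h3 : y.1.val < fr) (h4 : y.2.val < fc) :
    Closed fr fc (fun f => E f ∧ f x = y) := by
  intro ρ κ a b f hf
  refine ⟨h ρ κ a b f hf.1, ?_⟩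
  rw [conj_fix f x (a _ h1) (b _ h2), hf.2, a _ h3, b _ h4]

/-- everything known about the family -/
def Good (SM pb lb : Nat) (st : St) (E : (Cell → Cell) → Prop) : Prop :=
  ∀ f, E f → Valid SM pb lb f ∧ Rep pb lb st f ∧ ∀ u, st.U u → u.2 = 0 → f u ≠ u

/-- soundness of a state function -/
def Sound (SM pb lb : Nat) (F : StF) : Prop :=
  ∀ st fr fc, ap F st fr fc = true → fr ≤ 6 → fc ≤ 7 → ∀ E, Closed fr fc E →
    Good SM pb lb st E → ∀ f, ¬ E f

theorem stepS_sound {SM pb lb : Nat} {ih : StF} (hih : Sound SM pb lb ih) (st : St) (fr fc : Nat)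
    (s : Cell) (hU : st.U s)
    (h : stepS SM ih (ix s) st.cand st.c0 st.c1 st.c2 st.q1 st.q2 st.must st.un st.ns fr fc = true)
    (hfr : fr ≤ 6) (hfc : fc ≤ 7) (E : (Cell → Cell) → Prop) (hE : Closed fr fc E)
    (hG : Good SM pb lb st E) (hs : ∀ f, E f → f s = s) : ∀ f, ¬ E f := by
  intro f hf
  obtain ⟨V, R, C⟩ := hG f hf
  unfold stepS at h
  rw [ite_eq, ite_eq, stepS0_eq, (repS V R s hU (hs f hf)).2] at h
  have h1 : Nat.ble SM st.ns = false := by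
    by_contra hc
    simp only [Bool.not_eq_false] at hc
    have := Nat.le_of_ble_eq_true hc
    have hsD : s ∉ st.D := by simp [St.D, hU]
    have e := card_ins (fun z => f z = z) s st.D hsD
    have e2 := filter_le (fun z => f z = z) (insert s st.D)
    have e3 := V.scard
    have e4 := R.r3
    simp only [hs f hf, decide_true, Bool.toNat_true] at e
    omega
  have h2 : Nat.beq (Nat.mod (ix s) (nat_lit 7)) (nat_lit 0) = false := by
    by_contra hc
    simp only [Bool.not_eq_false] at hc
    have h3 : ix s % 7 = 0 := Nat.eq_of_beq_eq_true hc
    rw [ix_mod] at h3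
    exact C s hU (Fin.ext h3) (hs f hf)
  rw [h1, h2] at h
  simp only [cond_false, cond_true] at h
  refine hih _ fr fc h hfr hfc E hE ?_ f hf
  intro f' hf'
  obtain ⟨V', R', C'⟩ := hG f' hf'
  refine ⟨V', (repS V' R' s hU (hs f' hf')).1, ?_⟩
  intro u hu
  rw [U_S] at hu
  exact C' u hu.1

theorem stepP_sound {SM pb lb : Nat} {ih : StF} (hih : Sound SM pb lb ih) (st : St) (fr fc : Nat)
    (x y : Cell) (hU : st.U x) (hxy : y ≠ x)
    (h : stepP ih (ix x) st.cand st.c0 st.c1 st.c2 st.q1 st.q2 st.must st.un st.ns fr fc (ix y) = true)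
    (hfr : fr ≤ 6) (hfc : fc ≤ 7) (E : (Cell → Cell) → Prop)
    (hE : Closed (max fr (y.1.val + 1)) (max fc (y.2.val + 1)) E)
    (hG : Good SM pb lb st E) (hy : ∀ f, E f → f x = y) : ∀ f, ¬ E f := by
  intro f hf
  obtain ⟨V, R, C⟩ := hG f hf
  rw [stepP_eq, (repP V R x y hU hxy (hy f hf)).1] at h
  simp only [cond_true] at h
  obtain ⟨c, hc, hc'⟩ := sat_sound _ _ _ _ h
  rw [maxN_eq, maxN_eq] at hc
  have e1 : Nat.succ (Nat.div (ix y) (nat_lit 7)) = y.1.val + 1 := by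
    rw [← ix_div]; rfl
  have e2 : Nat.succ (Nat.mod (ix y) (nat_lit 7)) = y.2.val + 1 := by
    rw [← ix_mod]; rfl
  rw [e1, e2] at hc
  refine hih _ _ _ hc (by omega) (by omega) E hE ?_ f hf
  intro f' hf'
  obtain ⟨V', R', C'⟩ := hG f' hf'
  refine ⟨V', (repP V' R' x y hU hxy (hy f' hf')).2 c hc', ?_⟩
  intro u hu
  rw [U_P] at hu
  exact C' u hu.1

/-- bring an index down to `k` without moving the smaller ones -/
theorem exists_swap {n : Nat} (k : Nat) (i : Fin n) :
    ∃ ρ : Equiv.Perm (Fin n), (∀ j, j.val < k → ρ j = j) ∧ (ρ i).val ≤ k := by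
  by_cases h : i.val ≤ k
  · exact ⟨1, fun _ _ => rfl, h⟩
  · have hk : k < n := by have := i.isLt; omega
    refine ⟨Equiv.swap i ⟨k, hk⟩, ?_, ?_⟩
    · intro j hj
      apply Equiv.swap_apply_of_ne_of_ne
      · intro e; rw [e] at hj; omega
      · intro e; rw [e] at hj; simp at hj
    · rw [Equiv.swap_apply_left]

theorem gen_loop {b : Bool} {op : Nat} {child : Nat → Bool} {n : Nat}
    (h : ite' b (frc op (loop child n)) false = true) :
    b = true ∧ ∀ i, op.testBit i = true → child i = true := by
  rw [ite_eq, frc_eq] at h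
  cases hb : b with
  | false =>
    rw [hb] at h
    simp at h
  | true =>
    rw [hb, cond_true] at h
    exact ⟨rfl, loop_sound _ _ _ h⟩

theorem branch1_spec {SM : Nat} {ih : StF} {cand c0 c1 c2 q1 q2 must un ns x fr fc : Nat}
    (h : branch1 SM ih cand c0 c1 c2 q1 q2 must un ns x fr fc = true) :
    stepS SM ih x cand c0 c1 c2 q1 q2 must un ns fr fc = true ∧
    ∀ i, (Nat.land (Nat.land (colle fc) (rowle fr))
        (Nat.shiftRight cand (Nat.mul (nat_lit 64) (Nat.succ x)))).testBit i = true →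
      stepP ih x cand c0 c1 c2 q1 q2 must un ns fr fc i = true :=
  gen_loop h

theorem pos_eq (x y : Cell) : Nat.mul (nat_lit 64) (Nat.succ (ix x)) + ix y = pos x y := by
  unfold pos
  rfl

theorem branch_sound {SM pb lb : Nat} {ih : StF} (hih : Sound SM pb lb ih) (st : St) (fr fc : Nat)
    (x : Cell) (hU : st.U x) (hxr : x.1.val < fr) (hxc : x.2.val < fc)
    (h : branch1 SM ih st.cand st.c0 st.c1 st.c2 st.q1 st.q2 st.must st.un st.ns (ix x) fr fc = true)
    (hfr : fr ≤ 6) (hfc : fc ≤ 7) (E : (Cell → Cell) → Prop) (hE : Closed fr fc E)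
    (hG : Good SM pb lb st E) : ∀ f, ¬ E f := by
  obtain ⟨hS, hl⟩ := branch1_spec h
  intro f hf
  by_cases hfx : f x = x
  · refine stepS_sound hih st fr fc x hU hS hfr hfc (fun f => E f ∧ f x = x) (hE.fix x x hxr hxc hxr hxc)
      (fun f hf => hG f hf.1) (fun f hf => hf.2) f ⟨hf, hfx⟩
  · obtain ⟨ρ, hρ, hρ'⟩ := exists_swap fr (f x).1
    obtain ⟨κ, hκ, hκ'⟩ := exists_swap fc (f x).2
    have hcf := hE ρ κ hρ hκ f hf
    have hcx := conj_fix (ρ := ρ) (κ := κ) f x (hρ _ hxr) (hκ _ hxc)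
    have hne : ((ρ (f x).1, κ (f x).2) : Cell) ≠ x := by
      intro e
      apply hfx
      have e1 : ρ (f x).1 = ρ x.1 := by rw [hρ _ hxr]; exact congrArg Prod.fst e
      have e2 : κ (f x).2 = κ x.2 := by rw [hκ _ hxc]; exact congrArg Prod.snd e
      exact Prod.ext (ρ.injective e1) (κ.injective e2)
    generalize hy : ((ρ (f x).1, κ (f x).2) : Cell) = y at hcx hne
    have hy1 : y.1.val ≤ fr := by rw [← hy]; exact hρ'
    have hy2 : y.2.val ≤ fc := by rw [← hy]; exact hκ'
    obtain ⟨V, R, C⟩ := hG _ hcf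
    have hbit := R.r1 x hU (by rw [hcx]; exact hne)
    rw [hcx] at hbit
    have hP := hl (ix y) (by
      rw [tb_land, tb_rc fc (by omega) fr (by omega) _ (ix_lt y) (by rw [ix_mod]; exact hy2)
        (by rw [ix_div]; exact hy1), tb_shr, Bool.true_and, pos_eq]
      exact hbit)
    refine stepP_sound hih st fr fc x y hU hne hP hfr hfc (fun f => E f ∧ f x = y) ?_
      (fun f hf => hG f hf.1) (fun f hf => hf.2) _ ⟨hcf, hcx⟩
    exact (hE.mono (le_max_left _ _) (le_max_left _ _)).fix x y (by omega) (by omega) (by omega) (by omega)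

theorem un_cell {pb lb : Nat} {st : St} {f : Cell → Cell} (R : Rep pb lb st f) (x : Nat)
    (h : Nat.beq (Nat.land st.un (pbit x (nat_lit 42))) (nat_lit 0) = false) :
    ∃ u : Cell, x = ix u ∧ st.U u := by
  have h1 : st.un.testBit (64 * (x + 1) + 42) = true := land_pbit _ _ _ h
  obtain ⟨u, hu⟩ := R.r7 _ (by omega) h1
  have : x = ix u := by omega
  subst this
  exact ⟨u, rfl, h1⟩

theorem search_sound (SM pb lb n : Nat) : Sound SM pb lb (search SM n) := by
  induction n with
  | zero =>
    intro st fr fc h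
    exact absurd h (by simp [search, ap])
  | succ n ih =>
    intro st fr fc h hfr hfc E hE hG f hf
    have h' : (frc (hs (del st.un (Nat.add st.cand MM))) fun e =>
      ite' (nul e)
        (pick st.cand st.un fc (branch SM (search SM n) st.cand st.c0 st.c1 st.c2 st.q1 st.q2 st.must st.un st.ns fr fc))
        (frc (ixC (low (Nat.shiftRight e (nat_lit 106))))
          (prop SM (search SM n) st.cand st.c0 st.c1 st.c2 st.q1 st.q2 st.must st.un st.ns fr fc))) = true := h
    rw [frc_eq, ite_eq, frc_eq] at h'
    obtain ⟨V, R, C⟩ := hG f hf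
    cases hz : nul (hs (del st.un (Nat.add st.cand MM))) with
    | true =>
      rw [hz] at h'
      obtain ⟨x, hx⟩ := pick_sound _ _ _ _ h'
      unfold branch at hx
      rw [ite_eq, frc_eq, frc_eq, maxN_eq, maxN_eq] at hx
      cases hb : Nat.beq (Nat.land st.un (pbit x (nat_lit 42))) (nat_lit 0) with
      | true => rw [hb] at hx; simp at hx
      | false =>
        rw [hb] at hx
        obtain ⟨u, rfl, hu⟩ := un_cell R x hb
        have e1 : Nat.succ (Nat.div (ix u) (nat_lit 7)) = u.1.val + 1 := by
          rw [← ix_div]; rfl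
        have e2 : Nat.succ (Nat.mod (ix u) (nat_lit 7)) = u.2.val + 1 := by
          rw [← ix_mod]; rfl
        rw [e1, e2] at hx
        exact branch_sound ih st _ _ u hu (by omega) (by omega) hx (by omega) (by omega) E
          (hE.mono (le_max_left _ _) (le_max_left _ _)) hG f hf
    | false =>
      rw [hz] at h'
      simp only [cond_false] at h'
      generalize ixC (low (Nat.shiftRight (hs (del st.un (Nat.add st.cand MM))) (nat_lit 106))) = s at h'
      unfold prop at h'
      rw [ite_eq, ite_eq] at h'
      cases hb : Nat.beq (Nat.land st.un (pbit s (nat_lit 42))) (nat_lit 0) with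
      | true => rw [hb] at h'; simp at h'
      | false =>
        rw [hb] at h'
        obtain ⟨u, rfl, hu⟩ := un_cell R s hb
        simp only [cond_false] at h'
        cases hc : Nat.beq (Nat.land (Nat.shiftRight st.cand (Nat.mul (nat_lit 64) (Nat.succ (ix u)))) (nat_lit 4398046511103)) (nat_lit 0) with
        | false => rw [hc] at h'; simp at h'
        | true =>
          rw [hc] at h'
          refine stepS_sound ih st fr fc u hu h' hfr hfc E hE hG ?_ f hf
          intro f' hf'
          by_contra hne
          have h1 := (hG f' hf').2.1.r1 u hu hne
          have h2 : Nat.land (Nat.shiftRight st.cand (Nat.mul (nat_lit 64) (Nat.succ (ix u)))) (nat_lit 4398046511103) = 0 :=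
            Nat.eq_of_beq_eq_true hc
          have h3 := congrArg (fun m => Nat.testBit m (ix (f' u))) h2
          simp only [tb_land, tb_shr, Nat.zero_testBit] at h3
          rw [show Nat.testBit (nat_lit 4398046511103) (ix (f' u)) = true from full_tb _ (ix_lt _)] at h3
          rw [Bool.and_true] at h3
          rw [pos_eq, h1] at h3
          exact absurd h3 (by simp)

/-- initial masks -/
def base (a b : Nat) : Nat :=
  Nat.lor (Nat.mul a (Nat.sub (Nat.pow 2 2688) 1)) (Nat.mul b (Nat.shiftLeft 8191 2688))

theorem tb_line (i : Nat) : (Nat.shiftLeft 8191 2688).testBit i = decide (2688 ≤ i ∧ i < 2701) := by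
  rw [tb_shl, show 8191 = 2 ^ 13 - 1 by norm_num, Nat.testBit_two_pow_sub_one, Bool.eq_iff_iff]
  simp only [Bool.and_eq_true, decide_eq_true_eq]
  omega

theorem tb_mul01 (a n i : Nat) (ha : a ≤ 1) : (Nat.mul a n).testBit i = (decide (a = 1) && n.testBit i) := by
  change (a * n).testBit i = _
  interval_cases a <;> simp

theorem tb_base (a b i : Nat) (ha : a ≤ 1) (hb : b ≤ 1) : (base a b).testBit i =
    (decide (a = 1 ∧ i < 2688) || decide (b = 1 ∧ 2688 ≤ i ∧ i < 2701)) := by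
  unfold base
  rw [tb_lor, tb_mul01 _ _ _ ha, tb_mul01 _ _ _ hb, tb_ones, tb_line]
  simp

/-- initial state -/
noncomputable def st0 (pb lb : Nat) : St where
  cand := up 0 cand0
  c0 := up 0 (base (Nat.mod pb 2) (Nat.mod lb 2))
  c1 := up 0 (base (Nat.div pb 2) (Nat.div lb 2))
  c2 := 0
  q1 := 0
  q2 := 0
  must := up 0 (Nat.shiftLeft 8191 2688)
  un := HH
  ns := 0

theorem run_eq (SM lb pb : Nat) (t : Bool) (fuel : Nat) : run SM lb pb t fuel =
    cond t (stepS0 (search SM fuel) 0 (st0 pb lb).cand (st0 pb lb).c0 (st0 pb lb).c1 (st0 pb lb).c2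
      (st0 pb lb).q1 (st0 pb lb).q2 (st0 pb lb).must (st0 pb lb).un (st0 pb lb).ns 1 1)
    (ap (search SM fuel) (st0 pb lb) 0 1) := by
  unfold run
  simp only [frc_eq, ite_eq, st0, base, ap]

theorem U_0 (pb lb : Nat) (u : Cell) : (st0 pb lb).U u := by
  unfold St.U st0
  exact (tb_HH _).2 ⟨ix u, ix_lt u, rfl⟩

theorem D_0 (pb lb : Nat) : (st0 pb lb).D = ∅ := by
  unfold St.D
  rw [Finset.filter_eq_empty_iff]
  intro u _ h
  exact h (U_0 pb lb u)

theorem rep0 {SM pb lb : Nat} (hpb : pb ≤ 3) (hlb : lb ≤ 3) {f : Cell → Cell} (V : Valid SM pb lb f) :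
    Rep pb lb (st0 pb lb) f := by
  refine ⟨?_, ?_, ?_, ?_, ?_, ?_, ?_, ?_⟩
  · intro u _ hu
    obtain ⟨h1, h2⟩ := V.diff u hu
    simp only [Ne, Fin.ext_iff] at h1 h2
    simp only [st0, pos]
    apply tb_cand0 _ _ (ix_lt _) (ix_lt _)
    · rw [ix_div, ix_div]; omega
    · rw [ix_mod, ix_mod]; omega
  · intro u _
    exact U_0 pb lb _
  · rw [D_0]; rfl
  · intro p N b hT
    rw [D_0]
    simp only [Finset.filter_empty, Finset.card_empty, Nat.add_zero]
    obtain ⟨i, rfl⟩ : ∃ i, p = 64 + i := ⟨p - 64, by have := TI_ge hT; omega⟩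
    simp only [cv, st0]
    rw [show Nat.mod pb 2 = pb % 2 from rfl, show Nat.mod lb 2 = lb % 2 from rfl,
      show Nat.div pb 2 = pb / 2 from rfl, show Nat.div lb 2 = lb / 2 from rfl]
    rw [tb_up, tb_up, tb_base _ _ _ (by omega) (by omega), tb_base _ _ _ (by omega) (by omega)]
    have hcase : (b = pb ∧ i < 2688) ∨ (b = lb ∧ 2688 ≤ i ∧ i < 2701) := by
      rcases hT with ⟨u, _, hp, _, rfl⟩ | ⟨r, hp, _, rfl⟩ | ⟨c, hp, _, rfl⟩
      · have := ix_lt u; have := ix_lt (f u); unfold pos at hp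
        left; omega
      · right; omega
      · right; omega
    rcases hcase with ⟨rfl, hi⟩ | ⟨rfl, hi⟩
    · have e : ¬ (2688 ≤ i) := by omega
      simp only [hi, e]
      interval_cases b <;> simp
    · have e : ¬ (i < 2688) := by omega
      simp only [hi, e]
      interval_cases b <;> simp
  · intro p N b hT
    rw [D_0]
    change Nat.testBit 0 p = _
    simp
  · intro p N b hT
    rw [D_0]
    change Nat.testBit 0 p = _
    simp
  · intro p hp h
    obtain ⟨i, rfl⟩ : ∃ i, p = 64 + i := ⟨p - 64, by omega⟩
    simp only [st0] at h
    rw [tb_up, tb_line] at h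
    simp only [decide_eq_true_eq] at h
    by_cases h6 : i - 2688 < 6
    · exact ⟨_, lb, Or.inr (Or.inl ⟨⟨i - 2688, h6⟩, by simp only; omega, rfl, rfl⟩)⟩
    · exact ⟨_, lb, Or.inr (Or.inr ⟨⟨i - 2694, by omega⟩, by simp only; omega, rfl, rfl⟩)⟩
  · intro p _ h
    obtain ⟨u, hu, rfl⟩ := (tb_HH p).1 h
    refine ⟨(⟨u / 7, by omega⟩, ⟨u % 7, by omega⟩), ?_⟩
    have : ix ((⟨u / 7, by omega⟩, ⟨u % 7, by omega⟩) : Cell) = u := by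
      unfold ix; simp only; omega
    rw [this]

theorem run_sound {SM pb lb fuel : Nat} {t : Bool} (h : run SM lb pb t fuel = true)
    (hpb : pb ≤ 3) (hlb : lb ≤ 3) (E : (Cell → Cell) → Prop) (hE : Closed t.toNat 1 E)
    (hV : ∀ f, E f → Valid SM pb lb f)
    (h0 : ∀ f, E f → ∀ r : Fin 6, f (r, 0) = (r, 0) ↔ t = true ∧ r = 0) : ∀ f, ¬ E f := by
  intro f hf
  rw [run_eq] at h
  cases t with
  | false =>
    rw [cond_false] at h
    refine search_sound SM pb lb fuel _ _ _ h (by omega) (by omega) E hE ?_ f hf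
    intro f' hf'
    refine ⟨hV f' hf', rep0 hpb hlb (hV f' hf'), ?_⟩
    rintro ⟨r, c⟩ _ hc
    simp only at hc
    subst hc
    rw [Ne, h0 f' hf' r]
    simp
  | true =>
    have hix : ix ((0, 0) : Cell) = 0 := rfl
    have hfix : ∀ f, E f → f (0, 0) = (0, 0) := fun f hf => (h0 f hf 0).2 ⟨rfl, rfl⟩
    rw [cond_true, stepS0_eq] at h
    have hr := repS (hV f hf) (rep0 hpb hlb (hV f hf)) (0, 0) (U_0 _ _ _) (hfix f hf)
    rw [hix] at hr
    rw [hr.2, cond_true] at h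
    refine search_sound SM pb lb fuel _ _ _ h (by omega) (by omega) E hE ?_ f hf
    intro f' hf'
    have hr' := repS (hV f' hf') (rep0 hpb hlb (hV f' hf')) (0, 0) (U_0 _ _ _) (hfix f' hf')
    refine ⟨hV f' hf', hr'.1, ?_⟩
    rintro ⟨r, c⟩ hu hc
    simp only at hc
    subst hc
    rw [Ne, h0 f' hf' r]
    rw [← hix, U_S] at hu
    rintro ⟨_, rfl⟩
    exact hu.2 rfl

/-- proper complete colouring of the board -/
structure PC {n : Nat} (φ : Cell → Fin n) : Prop where
  prop : ∀ x y, nb x y = true → φ x ≠ φ y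
  surj : ∀ c, ∃ x, φ x = c
  comp : ∀ c d, c ≠ d → ∃ x y, nb x y = true ∧ φ x = c ∧ φ y = d

/-- colour class -/
def cl {n : Nat} (φ : Cell → Fin n) (c : Fin n) : Finset Cell := Finset.univ.filter fun z => φ z = c

theorem mem_cl {n : Nat} (φ : Cell → Fin n) (c : Fin n) (z : Cell) : z ∈ cl φ c ↔ φ z = c := by
  simp [cl]

theorem card_nb : ∀ x : Cell, (Finset.univ.filter fun z : Cell => nb z x = true).card = 11 := by
  decide +kernel

theorem card_nb2 (u v : Cell) (h1 : v.1 ≠ u.1) (h2 : v.2 ≠ u.2) :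
    (Finset.univ.filter fun z : Cell => (nb z u || nb z v) = true).card ≤ 20 := by
  have e : (Finset.univ.filter fun z : Cell => (nb z u || nb z v) = true) =
      (Finset.univ.filter fun z : Cell => nb z u = true) ∪ (Finset.univ.filter fun z : Cell => nb z v = true) := by
    ext z; simp
  have h := Finset.card_union_add_card_inter (Finset.univ.filter fun z : Cell => nb z u = true)
    (Finset.univ.filter fun z : Cell => nb z v = true)
  rw [card_nb, card_nb] at h
  have hsub : ({(u.1, v.2), (v.1, u.2)} : Finset Cell) ⊆
      (Finset.univ.filter fun z : Cell => nb z u = true) ∩ (Finset.univ.filter fun z : Cell => nb z v = true) := by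
    intro z hz
    simp only [Finset.mem_insert, Finset.mem_singleton] at hz
    simp only [Finset.mem_inter, Finset.mem_filter, Finset.mem_univ, true_and, nb_iff]
    rcases hz with rfl | rfl
    · refine ⟨⟨fun hh => h2 ?_, Or.inl rfl⟩, fun hh => h1 ?_, Or.inr rfl⟩
      · have := congrArg Prod.snd hh; exact this
      · have := congrArg Prod.fst hh; exact this.symm
    · refine ⟨⟨fun hh => h1 ?_, Or.inr rfl⟩, fun hh => h2 ?_, Or.inl rfl⟩
      · have := congrArg Prod.fst hh; exact this
      · have := congrArg Prod.snd hh; exact this.symm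
  have hne : ((u.1, v.2) : Cell) ≠ (v.1, u.2) := fun hh => h1 (by have := congrArg Prod.fst hh; exact this.symm)
  have h3 := Finset.card_le_card hsub
  rw [Finset.card_pair hne] at h3
  rw [e]
  omega

theorem cl_ge {n : Nat} {φ : Cell → Fin n} (P : PC φ) (hn : 13 ≤ n) (c : Fin n) : 2 ≤ (cl φ c).card := by
  by_contra hlt
  obtain ⟨x, hx⟩ := P.surj c
  have huniq : ∀ y, φ y = c → y = x := by
    intro y hy
    have : (cl φ c).card ≤ 1 := by omega
    exact Finset.card_le_one.1 this y ((mem_cl _ _ _).2 hy) x ((mem_cl _ _ _).2 hx)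
  have hsub : Finset.univ.erase c ⊆ (Finset.univ.filter fun z : Cell => nb z x = true).image φ := by
    intro d hd
    rw [Finset.mem_erase] at hd
    obtain ⟨a, b, hab, ha, hb⟩ := P.comp c d hd.1.symm
    rw [huniq a ha, nb_comm] at hab
    rw [Finset.mem_image]
    exact ⟨b, by simp [hab], hb⟩
  have h1 := Finset.card_le_card hsub
  have h2 := Finset.card_image_le (s := Finset.univ.filter fun z : Cell => nb z x = true) (f := φ)
  rw [card_nb] at h2
  rw [Finset.card_erase_of_mem (Finset.mem_univ _), Finset.card_univ, Fintype.card_fin] at h1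
  omega

theorem sum_cl {n : Nat} (φ : Cell → Fin n) : ∑ c, (cl φ c).card = 42 := by
  have h := Finset.card_eq_sum_card_fiberwise (s := (Finset.univ : Finset Cell)) (t := Finset.univ) (f := φ)
    (fun _ _ => by simp)
  rw [Finset.card_univ] at h
  have e : Fintype.card Cell = 42 := by simp [Cell]
  rw [e] at h
  exact h.symm

theorem le21 {n : Nat} {φ : Cell → Fin n} (P : PC φ) (hn : 13 ≤ n) : n ≤ 21 := by
  have h := Finset.card_nsmul_le_sum Finset.univ (fun c => (cl φ c).card) 2 (fun c _ => cl_ge P hn c)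
  rw [sum_cl] at h
  simp at h
  omega

theorem twos {n : Nat} {φ : Cell → Fin n} (P : PC φ) (hn : 13 ≤ n) :
    3 * n ≤ 42 + (Finset.univ.filter fun c => (cl φ c).card = 2).card := by
  have h : ∑ _c : Fin n, 3 ≤ ∑ c, ((cl φ c).card + if (cl φ c).card = 2 then 1 else 0) := by
    apply Finset.sum_le_sum
    intro c _
    have := cl_ge P hn c
    split <;> omega
  rw [Finset.sum_add_distrib, sum_cl, ← Finset.card_filter] at h
  simp at h
  omega

/-- `f` exchanges the two cells of each class in `Q` -/
structure Der {n : Nat} (φ : Cell → Fin n) (Q : Finset (Fin n)) (f : Cell → Cell) : Prop where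
  d1 : ∀ z, φ z ∈ Q → f z ≠ z ∧ φ (f z) = φ z
  d2 : ∀ z, φ z ∉ Q → f z = z
  d3 : ∀ q ∈ Q, (cl φ q).card = 2

theorem Der.exists {n : Nat} (φ : Cell → Fin n) (Q : Finset (Fin n)) (h : ∀ q ∈ Q, (cl φ q).card = 2) :
    ∃ f, Der φ Q f := by
  have : ∀ z, ∃ w, (φ z ∈ Q → w ≠ z ∧ φ w = φ z) ∧ (φ z ∉ Q → w = z) := by
    intro z
    by_cases hz : φ z ∈ Q
    · have h1 : 1 < (cl φ (φ z)).card := by rw [h _ hz]; norm_num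
      obtain ⟨w, hw, hne⟩ := Finset.exists_mem_ne h1 z
      exact ⟨w, fun _ => ⟨hne, (mem_cl _ _ _).1 hw⟩, fun hh => absurd hz hh⟩
    · exact ⟨z, fun hh => absurd hh hz, fun _ => rfl⟩
  choose f hf using this
  exact ⟨f, fun z => (hf z).1, fun z => (hf z).2, h⟩

section
variable {n : Nat} {φ : Cell → Fin n} {Q : Finset (Fin n)} {f : Cell → Cell}

theorem Der.two (D : Der φ Q f) {z w : Cell} (hz : φ z ∈ Q) (hw : φ w = φ z) : w = z ∨ w = f z := by
  by_contra hc
  rw [not_or] at hc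
  have hsub : ({z, f z, w} : Finset Cell) ⊆ cl φ (φ z) := by
    intro a ha
    simp only [Finset.mem_insert, Finset.mem_singleton] at ha
    rw [mem_cl]
    rcases ha with rfl | rfl | rfl
    · rfl
    · exact (D.d1 _ hz).2
    · exact hw
  have h1 := Finset.card_le_card hsub
  rw [D.d3 _ hz, Finset.card_eq_three.2 ⟨z, f z, w, (D.d1 z hz).1.symm, hc.1 ∘ Eq.symm, hc.2 ∘ Eq.symm, rfl⟩] at h1
  omega

theorem Der.memQ (D : Der φ Q f) {z : Cell} (h : f z ≠ z) : φ z ∈ Q := by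
  by_contra hc
  exact h (D.d2 z hc)

theorem Der.inv (D : Der φ Q f) (x : Cell) : f (f x) = x := by
  by_cases h : φ x ∈ Q
  · obtain ⟨h1, h2⟩ := D.d1 x h
    have h' : φ (f x) ∈ Q := by rw [h2]; exact h
    obtain ⟨h3, h4⟩ := D.d1 (f x) h'
    rcases D.two h (h4.trans h2) with e | e
    · exact e
    · exact absurd e h3
  · rw [D.d2 x h, D.d2 x h]

theorem Der.diff (P : PC φ) (D : Der φ Q f) (x : Cell) (h : f x ≠ x) : (f x).1 ≠ x.1 ∧ (f x).2 ≠ x.2 := by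
  have hc := (D.d1 x (D.memQ h)).2
  by_contra hh
  have : nb (f x) x = true := by
    rw [nb_iff]
    refine ⟨h, ?_⟩
    tauto
  exact P.prop _ _ this hc

/-- the neighbourhood of a class sees every other colour -/
theorem Der.cover (P : PC φ) (D : Der φ Q f) (u : Cell) (hu : f u ≠ u) (c : Fin n) (hc : c ≠ φ u) :
    ∃ b, (nb b u || nb b (f u)) = true ∧ φ b = c := by
  obtain ⟨a, b, hab, ha, hb⟩ := P.comp (φ u) c hc.symm
  rw [nb_comm] at hab
  refine ⟨b, ?_, hb⟩
  rcases D.two (D.memQ hu) ha with rfl | rfl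
  · simp [hab]
  · simp [hab]

theorem sub_card (N R : Cell → Bool) (hR : ∀ z, R z = true → N z = true) :
    (Finset.univ.filter fun z => (N z && !R z) = true).card + (Finset.univ.filter fun z => R z = true).card =
      (Finset.univ.filter fun z => N z = true).card := by
  rw [← Finset.card_union_of_disjoint]
  · congr 1
    ext z
    have := hR z
    simp only [Finset.mem_union, Finset.mem_filter, Finset.mem_univ, true_and]
    cases hN : N z <;> cases hr : R z <;> simp_all
  · rw [Finset.disjoint_filter]
    intro z _ h1 h2
    simp [h2] at h1

theorem Der.load (P : PC φ) (D : Der φ Q f) (u : Cell) (hu : f u ≠ u) :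
    Q.card + (Finset.univ.filter fun z => RR (fun z => nb z u || nb z (f u)) f z = true).card ≤ 21 := by
  have hd := D.diff P u hu
  have h20 := card_nb2 u (f u) hd.1 hd.2
  have hs := sub_card (fun z => nb z u || nb z (f u)) (RR (fun z => nb z u || nb z (f u)) f)
    (fun z hz => by unfold RR at hz; rw [Bool.and_eq_true] at hz; exact hz.1)
  have hsub : Q.erase (φ u) ⊆ (Finset.univ.filter fun z =>
      ((nb z u || nb z (f u)) && !RR (fun z => nb z u || nb z (f u)) f z) = true).image φ := by
    intro q hq
    rw [Finset.mem_erase] at hq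
    obtain ⟨b, hb, hbq⟩ := D.cover P u hu q hq.1
    rw [Finset.mem_image]
    have hbQ : φ b ∈ Q := by rw [hbq]; exact hq.2
    by_cases hR : RR (fun z => nb z u || nb z (f u)) f b = true
    · have hR2 := hR
      simp only [RR, hb, (D.d1 b hbQ).1, decide_false, Bool.false_or, Bool.true_and, Bool.and_eq_true,
        decide_eq_true_eq] at hR2
      refine ⟨f b, ?_, by rw [(D.d1 b hbQ).2, hbq]⟩
      have hlt : ¬ ix (f b) < ix b := by omega
      rw [Finset.mem_filter]
      refine ⟨Finset.mem_univ _, ?_⟩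
      simp only [RR, hR2.1, D.inv b, (D.d1 b hbQ).1.symm, hlt, decide_false, Bool.and_false, Bool.or_false,
        Bool.not_false, Bool.and_true]
    · refine ⟨b, ?_, hbq⟩
      rw [Finset.mem_filter]
      refine ⟨Finset.mem_univ _, ?_⟩
      rw [hb, Bool.not_eq_true] at *
      rw [hR]
      rfl
  have h1 := Finset.card_le_card hsub
  have h2 := Finset.card_image_le (s := Finset.univ.filter fun z =>
      ((nb z u || nb z (f u)) && !RR (fun z => nb z u || nb z (f u)) f z) = true) (f := φ)
  have h3 := Finset.card_erase_of_mem (D.memQ hu)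
  omega

theorem Der.dbl (P : PC φ) (D : Der φ Q f) (u : Cell) (hu : f u ≠ u) :
    n + (Finset.univ.filter fun z => R2 (fun z => nb z u || nb z (f u)) f z = true).card ≤ 21 := by
  have hd := D.diff P u hu
  have h20 := card_nb2 u (f u) hd.1 hd.2
  have hs := sub_card (fun z => nb z u || nb z (f u)) (R2 (fun z => nb z u || nb z (f u)) f)
    (fun z hz => by unfold R2 at hz; rw [Bool.and_eq_true] at hz; exact hz.1)
  have hsub : Finset.univ.erase (φ u) ⊆ (Finset.univ.filter fun z =>
      ((nb z u || nb z (f u)) && !R2 (fun z => nb z u || nb z (f u)) f z) = true).image φ := by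
    intro q hq
    rw [Finset.mem_erase] at hq
    obtain ⟨b, hb, hbq⟩ := D.cover P u hu q hq.1
    rw [Finset.mem_image]
    by_cases hR : R2 (fun z => nb z u || nb z (f u)) f b = true
    · have hR2 := hR
      simp only [R2, hb, Bool.true_and, Bool.and_eq_true, decide_eq_true_eq] at hR2
      have hbb : f b ≠ b := fun h => by rw [h] at hR2; omega
      refine ⟨f b, ?_, by rw [(D.d1 b (D.memQ hbb)).2, hbq]⟩
      have hlt : ¬ ix (f b) < ix b := by omega
      rw [Finset.mem_filter]
      refine ⟨Finset.mem_univ _, ?_⟩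
      simp only [R2, hR2.1, D.inv b, hlt, decide_false, Bool.and_false, Bool.not_false, Bool.and_true]
    · refine ⟨b, ?_, hbq⟩
      rw [Finset.mem_filter]
      refine ⟨Finset.mem_univ _, ?_⟩
      rw [hb, Bool.not_eq_true] at *
      rw [hR]
      rfl
  have h1 := Finset.card_le_card hsub
  have h2 := Finset.card_image_le (s := Finset.univ.filter fun z =>
      ((nb z u || nb z (f u)) && !R2 (fun z => nb z u || nb z (f u)) f z) = true) (f := φ)
  have h3 := Finset.card_erase_of_mem (Finset.mem_univ (φ u))
  rw [Finset.card_univ, Fintype.card_fin] at h3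
  have h4 := (φ u).isLt
  omega

theorem Der.line (P : PC φ) (D : Der φ Q f) (N : Cell → Bool)
    (hN : ∀ x y, N x = true → N y = true → x.1 = y.1 ∨ x.2 = y.2) :
    Q.card + (Finset.univ.filter fun z => RR N f z = true).card ≤ n ∧
    (Finset.univ.filter fun z => R2 N f z = true).card = 0 := by
  have h2 : ∀ z, R2 N f z = false := by
    intro z
    by_contra hc
    simp only [R2, Bool.not_eq_false, Bool.and_eq_true, decide_eq_true_eq] at hc
    have hne : f z ≠ z := fun h => by rw [h] at hc; omega
    have := D.diff P z hne
    have := hN _ _ hc.2.1 hc.1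
    tauto
  have h3 : ∀ z, RR N f z = true → N z = true ∧ f z = z := by
    intro z hz
    have := h2 z
    simp only [RR, R2, Bool.and_eq_true, Bool.or_eq_true, decide_eq_true_eq, Bool.and_eq_false_iff,
      decide_eq_false_iff_not] at hz this
    refine ⟨hz.1, ?_⟩
    rcases hz.2 with h | h
    · exact h
    · exfalso
      rcases this with h' | h' | h'
      · rw [hz.1] at h'; cases h'
      · rw [h.1] at h'; cases h'
      · exact h' h.2
  constructor
  · have hdis : Disjoint Q ((Finset.univ.filter fun z => RR N f z = true).image φ) := by
      rw [Finset.disjoint_left]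
      intro q hq hq'
      rw [Finset.mem_image] at hq'
      obtain ⟨z, hz, rfl⟩ := hq'
      rw [Finset.mem_filter] at hz
      exact (D.d1 z hq).1 (h3 z hz.2).2
    have hinj : ((Finset.univ.filter fun z => RR N f z = true).image φ).card =
        (Finset.univ.filter fun z => RR N f z = true).card := by
      apply Finset.card_image_of_injOn
      intro x hx y hy hxy
      simp only [Finset.coe_filter, Finset.mem_univ, true_and, Set.mem_ofPred_eq] at hx hy
      by_contra hne
      exact P.prop x y ((nb_iff _ _).2 ⟨hne, hN _ _ (h3 x hx).1 (h3 y hy).1⟩) hxy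
    rw [← hinj, ← Finset.card_union_of_disjoint hdis]
    exact (Finset.card_le_univ _).trans (by simp)
  · rw [Finset.card_eq_zero, Finset.filter_eq_empty_iff]
    intro z _
    rw [h2 z]
    simp

theorem Der.scard (D : Der φ Q f) : (Finset.univ.filter fun z => f z = z).card + 2 * Q.card = 42 := by
  have h1 : (Finset.univ.filter fun z => φ z ∈ Q).card = ∑ q ∈ Q, (cl φ q).card := by
    rw [Finset.card_eq_sum_card_fiberwise (s := Finset.univ.filter fun z => φ z ∈ Q) (t := Q) (f := φ)
      (fun z hz => by simpa using hz)]
    apply Finset.sum_congr rfl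
    intro q hq
    congr 1
    ext z
    simp only [Finset.mem_filter, Finset.mem_univ, true_and, mem_cl]
    constructor
    · exact fun h => h.2
    · exact fun h => ⟨by rw [h]; exact hq, h⟩
  rw [Finset.sum_congr rfl (fun q hq => D.d3 q hq)] at h1
  have h2 := Finset.card_filter_add_card_filter_not (s := (Finset.univ : Finset Cell)) (fun z => φ z ∈ Q)
  have h3 : (Finset.univ.filter fun z => f z = z) = Finset.univ.filter fun z => ¬ φ z ∈ Q := by
    ext z
    simp only [Finset.mem_filter, Finset.mem_univ, true_and]
    exact ⟨fun h hq => (D.d1 z hq).1 h, D.d2 z⟩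
  have e : Fintype.card Cell = 42 := by simp [Cell]
  rw [Finset.card_univ, e] at h2
  simp at h1
  rw [h3]
  omega

theorem Der.valid (P : PC φ) (D : Der φ Q f) {SM pb lb : Nat} (hn : 19 ≤ n) (h1 : pb + 15 ≤ Q.card)
    (h2 : lb + n ≤ 6 + Q.card) (h3 : 42 ≤ 2 * Q.card + SM) : Valid SM pb lb f := by
  have hrow : ∀ r : Fin 6, ∀ x y : Cell, decide (x.1 = r) = true → decide (y.1 = r) = true →
      x.1 = y.1 ∨ x.2 = y.2 := by
    intro r x y hx hy
    simp only [decide_eq_true_eq] at hx hy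
    left; rw [hx, hy]
  have hcol : ∀ r : Fin 7, ∀ x y : Cell, decide (x.2 = r) = true → decide (y.2 = r) = true →
      x.1 = y.1 ∨ x.2 = y.2 := by
    intro r x y hx hy
    simp only [decide_eq_true_eq] at hx hy
    right; rw [hx, hy]
  refine ⟨D.inv, D.diff P, ?_, ?_, ?_, ?_⟩
  · intro x y hx hy hyx hyfx
    have hne : φ x ≠ φ y := by
      intro h
      rcases D.two (D.memQ hx) h.symm with e | e
      · exact hyx e
      · exact hyfx e
    obtain ⟨a, b, hab, ha, hb⟩ := P.comp _ _ hne
    rcases D.two (D.memQ hx) ha with rfl | rfl <;> rcases D.two (D.memQ hy) hb with rfl | rfl <;> tauto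
  · rintro p N b (⟨u, hu, _, rfl, rfl⟩ | ⟨r, _, rfl, rfl⟩ | ⟨r, _, rfl, rfl⟩)
    · have := D.load P u hu
      omega
    · have := (D.line P _ (hrow r)).1
      omega
    · have := (D.line P _ (hcol r)).1
      omega
  · rintro p N b (⟨u, hu, _, rfl, rfl⟩ | ⟨r, _, rfl, rfl⟩ | ⟨r, _, rfl, rfl⟩)
    · have := D.dbl P u hu
      omega
    · have := (D.line P _ (hrow r)).2
      omega
    · have := (D.line P _ (hcol r)).2
      omega
  · have := D.scard
    omega

end

/-- recoloured board -/
def rel {n : Nat} (ρ : Equiv.Perm (Fin 6)) (κ : Equiv.Perm (Fin 7)) (φ : Cell → Fin n) (z : Cell) : Fin n :=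
  φ (ρ.symm z.1, κ.symm z.2)

theorem rel_map {n : Nat} (ρ : Equiv.Perm (Fin 6)) (κ : Equiv.Perm (Fin 7)) (φ : Cell → Fin n) (z : Cell) :
    rel ρ κ φ (Prod.map ρ κ z) = φ z := by
  simp [rel]

theorem nb_map (ρ : Equiv.Perm (Fin 6)) (κ : Equiv.Perm (Fin 7)) (x y : Cell) :
    nb (Prod.map ρ κ x) (Prod.map ρ κ y) = nb x y := by
  rw [Bool.eq_iff_iff, nb_iff, nb_iff]
  simp [Prod.ext_iff]

theorem ex_map (ρ : Equiv.Perm (Fin 6)) (κ : Equiv.Perm (Fin 7)) (z : Cell) :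
    ∃ w, z = Prod.map ρ κ w := ⟨(ρ.symm z.1, κ.symm z.2), by simp⟩

theorem conj_map (ρ : Equiv.Perm (Fin 6)) (κ : Equiv.Perm (Fin 7)) (f : Cell → Cell) (z : Cell) :
    conj ρ κ f (Prod.map ρ κ z) = Prod.map ρ κ (f z) := by
  simp [conj]

theorem map_inj (ρ : Equiv.Perm (Fin 6)) (κ : Equiv.Perm (Fin 7)) {x y : Cell} :
    Prod.map ρ κ x = Prod.map ρ κ y ↔ x = y :=
  (ρ.injective.prodMap κ.injective).eq_iff

theorem PC.rel {n : Nat} {φ : Cell → Fin n} (P : PC φ) (ρ : Equiv.Perm (Fin 6)) (κ : Equiv.Perm (Fin 7)) :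
    PC (rel ρ κ φ) := by
  refine ⟨?_, ?_, ?_⟩
  · intro x y h
    obtain ⟨x, rfl⟩ := ex_map ρ κ x
    obtain ⟨y, rfl⟩ := ex_map ρ κ y
    rw [nb_map] at h
    rw [rel_map, rel_map]
    exact P.prop x y h
  · intro c
    obtain ⟨x, hx⟩ := P.surj c
    exact ⟨Prod.map ρ κ x, by rw [rel_map, hx]⟩
  · intro c d hcd
    obtain ⟨x, y, h, h1, h2⟩ := P.comp c d hcd
    exact ⟨Prod.map ρ κ x, Prod.map ρ κ y, by rw [nb_map, h], by rw [rel_map, h1], by rw [rel_map, h2]⟩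

theorem Der.rel {n : Nat} {φ : Cell → Fin n} {Q : Finset (Fin n)} {f : Cell → Cell} (D : Der φ Q f)
    (ρ : Equiv.Perm (Fin 6)) (κ : Equiv.Perm (Fin 7)) : Der (rel ρ κ φ) Q (conj ρ κ f) := by
  refine ⟨?_, ?_, ?_⟩
  · intro z hz
    obtain ⟨z, rfl⟩ := ex_map ρ κ z
    rw [rel_map] at hz
    rw [conj_map, rel_map, rel_map, Ne, map_inj]
    exact D.d1 z hz
  · intro z hz
    obtain ⟨z, rfl⟩ := ex_map ρ κ z
    rw [rel_map] at hz
    rw [conj_map, map_inj]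
    exact D.d2 z hz
  · intro q hq
    rw [← D.d3 q hq]
    symm
    apply Finset.card_bij (fun z _ => Prod.map ρ κ z)
    · intro z hz
      rw [mem_cl] at hz ⊢
      rw [rel_map, hz]
    · intro a _ b _ h
      exact (map_inj ρ κ).1 h
    · intro z hz
      obtain ⟨z, rfl⟩ := ex_map ρ κ z
      rw [mem_cl, rel_map] at hz
      exact ⟨z, (mem_cl _ _ _).2 hz, rfl⟩

/-- family of configurations given to the search -/
def Fam {n : Nat} (Q : Finset (Fin n)) (t : Bool) (f : Cell → Cell) : Prop :=
  ∃ φ : Cell → Fin n, PC φ ∧ Der φ Q f ∧ ∀ r : Fin 6, f (r, 0) = (r, 0) ↔ t = true ∧ r = 0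

theorem conj_eq (ρ : Equiv.Perm (Fin 6)) (κ : Equiv.Perm (Fin 7)) (f : Cell → Cell) (z : Cell) :
    conj ρ κ f z = z ↔ f (ρ.symm z.1, κ.symm z.2) = (ρ.symm z.1, κ.symm z.2) := by
  obtain ⟨z, rfl⟩ := ex_map ρ κ z
  rw [conj_map, map_inj]
  simp

theorem Fam.closed {n : Nat} (Q : Finset (Fin n)) (t : Bool) : Closed t.toNat 1 (Fam Q t) := by
  rintro ρ κ h1 h2 f ⟨φ, P, D, h⟩
  refine ⟨rel ρ κ φ, P.rel ρ κ, D.rel ρ κ, ?_⟩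
  intro r
  have hk : κ.symm 0 = 0 := by rw [Equiv.symm_apply_eq, h2 0 (by simp)]
  rw [conj_eq]
  simp only [hk]
  rw [h]
  cases t with
  | false => simp
  | true =>
    have hr : ρ 0 = 0 := h1 0 (by simp)
    rw [Equiv.symm_apply_eq, hr]

theorem exists_col (f : Cell → Cell) (h : (Finset.univ.filter fun z => f z = z).card ≤ 13) :
    ∃ c : Fin 7, ∀ r r' : Fin 6, f (r, c) = (r, c) → f (r', c) = (r', c) → r = r' := by
  by_contra hc
  push Not at hc
  have hsum := Finset.card_eq_sum_card_fiberwise (s := Finset.univ.filter fun z : Cell => f z = z)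
    (t := Finset.univ) (f := Prod.snd) (fun _ _ => by simp)
  have h2 : ∀ c ∈ (Finset.univ : Finset (Fin 7)),
      2 ≤ ((Finset.univ.filter fun z : Cell => f z = z).filter fun z => z.2 = c).card := by
    intro c _
    obtain ⟨r, r', h1, h2, hne⟩ := hc c
    have : ({(r, c), (r', c)} : Finset Cell) ⊆ (Finset.univ.filter fun z : Cell => f z = z).filter fun z => z.2 = c := by
      intro z hz
      simp only [Finset.mem_insert, Finset.mem_singleton] at hz
      rcases hz with rfl | rfl <;> simp [h1, h2]
    have := Finset.card_le_card this
    rwa [Finset.card_pair (fun hh => hne (congrArg Prod.fst hh))] at this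
  have := Finset.card_nsmul_le_sum _ _ _ h2
  rw [← hsum] at this
  simp at this
  omega

theorem no_col {n : Nat} {φ : Cell → Fin n} (P : PC φ) (hn : 19 ≤ n) {SM pb lb fuel : Nat}
    (K : Nat) (hK : K + 42 ≤ 3 * n) (hpb : pb ≤ 3) (hlb : lb ≤ 3) (hSM : SM ≤ 13)
    (h1 : pb + 15 ≤ K) (h2 : lb + n ≤ 6 + K) (h3 : 42 ≤ 2 * K + SM)
    (ht : run SM lb pb true fuel = true) (hf : run SM lb pb false fuel = true) : False := by
  have htw := twos P (by omega)
  obtain ⟨Q, hQ, rfl⟩ := Finset.exists_subset_card_eq (s := Finset.univ.filter fun c => (cl φ c).card = 2)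
    (n := K) (by omega)
  obtain ⟨f, D⟩ := Der.exists φ Q (fun q hq => by have := hQ hq; rw [Finset.mem_filter] at this; exact this.2)
  have hs := (D.valid P hn h1 h2 h3).scard
  obtain ⟨c, hc⟩ := exists_col f (by omega)
  have hval : ∀ t f, Fam Q t f → Valid SM pb lb f := by
    rintro t f ⟨φ, P, D, _⟩
    exact D.valid P hn h1 h2 h3
  have h0 : ∀ t f, Fam Q t f → ∀ r : Fin 6, f (r, 0) = (r, 0) ↔ t = true ∧ r = 0 := by
    rintro t f ⟨φ, P, D, h⟩
    exact h
  have hk : (Equiv.swap 0 c).symm 0 = c := by simp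
  by_cases hex : ∃ r, f (r, c) = (r, c)
  · obtain ⟨r, hr⟩ := hex
    apply run_sound ht hpb hlb (Fam Q true) (Fam.closed Q true) (hval true) (h0 true)
      (conj (Equiv.swap 0 r) (Equiv.swap 0 c) f)
    refine ⟨_, P.rel _ _, D.rel _ _, ?_⟩
    intro r'
    rw [conj_eq]
    simp only [hk, true_and]
    constructor
    · intro h
      have := hc _ _ hr h
      rw [eq_comm, Equiv.symm_apply_eq] at this
      rw [this]
      simp
    · rintro rfl
      simpa using hr
  · apply run_sound hf hpb hlb (Fam Q false) (Fam.closed Q false) (hval false) (h0 false)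
      (conj (Equiv.refl _) (Equiv.swap 0 c) f)
    refine ⟨_, P.rel _ _, D.rel _ _, ?_⟩
    intro r'
    rw [conj_eq]
    simp only [hk]
    constructor
    · intro h
      exact absurd ⟨_, h⟩ hex
    · simp

theorem upper {n : Nat} {φ : Cell → Fin n} (P : PC φ)
    (r1 : run 6 3 3 true 100 = true) (r2 : run 6 3 3 false 100 = true)
    (r3 : run 12 2 0 true 100 = true) (r4 : run 12 2 0 false 100 = true) : n ≤ 18 := by
  by_contra hn
  have h21 := le21 P (by omega)
  by_cases h19 : n = 19
  · exact no_col P (by omega) 15 (by omega) (by norm_num) (by norm_num) (by norm_num) (by norm_num)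
      (by omega) (by norm_num) r3 r4
  · exact no_col P (by omega) 18 (by omega) (by norm_num) (by norm_num) (by norm_num) (by norm_num)
      (by omega) (by norm_num) r1 r2

/-- a colouring with 18 colours -/
def colTab : List Nat :=
  [0, 1, 2, 3, 4, 5, 6,
   6, 7, 8, 9, 10, 11, 0,
   12, 13, 14, 15, 16, 17, 1,
   16, 11, 3, 2, 12, 7, 4,
   9, 4, 17, 6, 1, 14, 2,
   5, 15, 10, 13, 8, 0, 3]

/-- the colouring as a function -/
def col18 (z : Cell) : Fin 18 := Fin.ofNat 18 (colTab.getD (ix z) 0)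

theorem col18_prop : ∀ x y : Cell, nb x y = true → col18 x ≠ col18 y := by
  decide +kernel

/-- first cells of the classes -/
def tab1 : List Nat := [0, 1, 2, 3, 4, 5, 7, 8, 9, 10, 11, 12, 14, 15, 16, 17, 18, 19]

/-- second cells of the classes -/
def tab2 : List Nat := [40, 32, 24, 23, 29, 35, 31, 26, 39, 28, 37, 22, 25, 38, 33, 36, 21, 30]

/-- cell with a given index -/
def cellOf (k : Nat) : Cell := (Fin.ofNat 6 (k / 7), Fin.ofNat 7 (k % 7))

theorem col18_tab : ∀ c : Fin 18, col18 (cellOf (tab1.getD c.val 0)) = c ∧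
    col18 (cellOf (tab2.getD c.val 0)) = c := by
  decide +kernel

theorem col18_adj : ∀ c d : Fin 18, c ≠ d →
    nb (cellOf (tab1.getD c.val 0)) (cellOf (tab1.getD d.val 0)) = true ∨
    nb (cellOf (tab1.getD c.val 0)) (cellOf (tab2.getD d.val 0)) = true ∨
    nb (cellOf (tab2.getD c.val 0)) (cellOf (tab1.getD d.val 0)) = true ∨
    nb (cellOf (tab2.getD c.val 0)) (cellOf (tab2.getD d.val 0)) = true := by
  decide +kernel

theorem col18_comp (c d : Fin 18) (h : c ≠ d) :
    ∃ x y : Cell, nb x y = true ∧ col18 x = c ∧ col18 y = d := by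
  rcases col18_adj c d h with h | h | h | h
  · exact ⟨_, _, h, (col18_tab c).1, (col18_tab d).1⟩
  · exact ⟨_, _, h, (col18_tab c).1, (col18_tab d).2⟩
  · exact ⟨_, _, h, (col18_tab c).2, (col18_tab d).1⟩
  · exact ⟨_, _, h, (col18_tab c).2, (col18_tab d).2⟩

theorem adj_iff (x y : Cell) :
    ((⊤ : SimpleGraph (Fin 6)) □ (⊤ : SimpleGraph (Fin 7))).Adj x y ↔ nb x y = true := by
  rw [SimpleGraph.boxProd_adj, nb_iff, SimpleGraph.top_adj, SimpleGraph.top_adj]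
  simp only [Ne, Prod.ext_iff]
  tauto

theorem run1 : run 6 3 3 true 100 = true := by decide +kernel
theorem run2 : run 6 3 3 false 100 = true := by decide +kernel
theorem run3 : run 12 2 0 true 100 = true := by decide +kernel
theorem run4 : run 12 2 0 false 100 = true := by decide +kernel

end Achr

theorem achr_K6_K7 :
    achr ((⊤ : SimpleGraph (Fin 6)) □ (⊤ : SimpleGraph (Fin 7))) = 18 := by
  apply IsGreatest.csSup_eq
  constructor
  · refine ⟨Achr.col18, ?_, ?_, ?_⟩
    · intro v w h
      exact Achr.col18_prop v w ((Achr.adj_iff v w).1 h)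
    · intro c
      obtain ⟨d, hd⟩ := exists_ne c
      obtain ⟨x, y, _, hx, _⟩ := Achr.col18_comp c d hd.symm
      exact ⟨x, hx⟩
    · intro c d h
      obtain ⟨x, y, hxy, hx, hy⟩ := Achr.col18_comp c d h
      exact ⟨x, y, (Achr.adj_iff x y).2 hxy, hx, hy⟩
  · rintro n ⟨φ, h1, h2, h3⟩
    have P : Achr.PC φ := by
      refine ⟨fun x y h => h1 x y ((Achr.adj_iff x y).2 h), h2, ?_⟩
      intro c d hcd
      obtain ⟨x, y, h, hx, hy⟩ := h3 c d hcd
      exact ⟨x, y, (Achr.adj_iff x y).1 h, hx, hy⟩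
    exact Achr.upper P Achr.run1 Achr.run2 Achr.run3 Achr.run4
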